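/- 4 ∫_0^1 (1−t) [K(√(1−t))]² K(√t) / (1+t)^{3/2} dt = [Γ(1/8) Γ(3/8)]² / 24. -/

import Mathlib

open Real MeasureTheory intervalIntegral

/-- Complete elliptic integral of the first kind. -/
noncomputable def ellipticK (k : ℝ) : ℝ :=
  ∫ θ in (0:ℝ)..(π/2), 1 / Real.sqrt (1 - k^2 * Real.sin θ ^ 2)

open Set Filter Topology
open ENNReal (ofReal)
open scoped ENNReal

/-!
Let `q` be the multiple `√2 π P₋₁⸝₄(-x)` of a Legendre function of degree `-1/4`. A quadratic
transformation of `K` turns the integral into a multiple of `∫ q(x)² q(-x) dx` over `(-1, 1)`. The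
product `u(x) = q(x) q(-x)` solves a third-order linear equation, so by Lagrange's identity its
integral against the Poisson kernel `P(r, x)` of the unit ball of `ℝ³` is a solution, regular at
`r = 0`, of the differential equation of `K(r)`. It is thus `A K(r)`, and comparing the integrals
against `r dr` gives `A = 8 √2 π`.

Since `q(x) = 8 ∫₀¹ (1 - σ²) P(σ⁴, x) dσ`, it follows that `∫ q(x)² q(-x) dx` is a multiple of
`∫₀¹ (1 - σ²) K(σ⁴) dσ`. Landen's transformation reduces the latter to `∫₀¹ (1 + σ²) K(σ⁴) dσ`,
which unfolds by symmetry into the product of the two lemniscatic-type integrals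
`∫₀¹ ξ² (1 - ξ⁸)^(-1/2) dξ` and `∫₀¹ (1 - ξ⁸)^(-1/2) dξ`.
-/

section ChangeOfVariables

variable {s t : Set ℝ} {φ φ' : ℝ → ℝ}

lemma setLIntegral_eq_of_bijOn (hs : MeasurableSet s) (hφ : BijOn φ s t)
    (hφ' : ∀ x ∈ s, HasDerivAt φ (φ' x) x) (g : ℝ → ℝ≥0∞) :
    ∫⁻ y in t, g y = ∫⁻ x in s, ofReal |φ' x| * g (φ x) := by
  rw [← hφ.image_eq]
  exact lintegral_image_eq_lintegral_abs_deriv_mul hs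
    (fun x hx => (hφ' x hx).hasDerivWithinAt) hφ.injOn g

lemma setLIntegral_ofReal_eq_of_bijOn {f g : ℝ → ℝ} (hs : MeasurableSet s) (hφ : BijOn φ s t)
    (hφ' : ∀ x ∈ s, HasDerivAt φ (φ' x) x) (hfg : ∀ x ∈ s, |φ' x| * g (φ x) = f x) :
    ∫⁻ y in t, ofReal (g y) = ∫⁻ x in s, ofReal (f x) := by
  rw [setLIntegral_eq_of_bijOn hs hφ hφ']
  refine setLIntegral_congr_fun hs fun x hx => ?_
  rw [← ENNReal.ofReal_mul (abs_nonneg _), hfg x hx]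

lemma bijOn_mul_left_Ioi {c : ℝ} (hc : 0 < c) : BijOn (fun x => c * x) (Ioi 0) (Ioi 0) :=
  InvOn.bijOn (f' := fun x => x / c)
    ⟨fun x _ => by field_simp, fun x _ => by field_simp⟩
    (fun _ hx => mul_pos hc hx) (fun _ hx => div_pos hx hc)

lemma bijOn_mul_left_Ioo {c : ℝ} (hc : 0 < c) :
    BijOn (fun x => c * x) (Ioo 0 1) (Ioo 0 c) :=
  InvOn.bijOn (f' := fun x => x / c)
    ⟨fun x _ => by field_simp, fun x _ => by field_simp⟩
    (fun _ hx => ⟨mul_pos hc hx.1, mul_lt_of_lt_one_right hc hx.2⟩)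
    (fun _ hx => ⟨div_pos hx.1 hc, (div_lt_one hc).2 hx.2⟩)

lemma setLIntegral_Ioo_eq_mul_left {c : ℝ} (hc : 0 < c) (g : ℝ → ℝ≥0∞) :
    ∫⁻ y in Ioo 0 c, g y = ofReal c * ∫⁻ x in Ioo 0 1, g (c * x) := by
  rw [setLIntegral_eq_of_bijOn (φ' := fun _ => c) measurableSet_Ioo (bijOn_mul_left_Ioo hc)
    (fun x _ => by simpa using (hasDerivAt_id x).const_mul c), abs_of_pos hc,
    lintegral_const_mul' _ _ ENNReal.ofReal_ne_top]

end ChangeOfVariables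

section SetLIntegral

lemma setLIntegral_ofReal_const_mul {s : Set ℝ} {c : ℝ} (hc : 0 ≤ c) (f : ℝ → ℝ) :
    ∫⁻ x in s, ofReal (c * f x) = ofReal c * ∫⁻ x in s, ofReal (f x) := by
  simp_rw [ENNReal.ofReal_mul hc]
  exact lintegral_const_mul' _ _ ENNReal.ofReal_ne_top

lemma ofReal_intervalIntegral_eq_setLIntegral {f : ℝ → ℝ} {a b : ℝ} (hab : a ≤ b)
    (hf : ContinuousOn f (Icc a b)) (hf0 : ∀ x ∈ Icc a b, 0 ≤ f x) :
    ofReal (∫ x in a..b, f x) = ∫⁻ x in Ioo a b, ofReal (f x) := by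
  rw [integral_of_le hab, integral_Ioc_eq_integral_Ioo, ofReal_integral_eq_lintegral_ofReal]
  · exact hf.integrableOn_Icc.mono_set Ioo_subset_Icc_self
  · exact ae_restrict_of_forall_mem measurableSet_Ioo fun x hx => hf0 x (Ioo_subset_Icc_self hx)

lemma lintegral_eq_two_mul_of_even {f : ℝ → ℝ≥0∞} (hf : ∀ x, f (-x) = f x) :
    ∫⁻ x, f x = 2 * ∫⁻ x in Ioi 0, f x := by
  have h_reflect : ∫⁻ x in Iio 0, f x = ∫⁻ x in Ioi 0, f x := by
    have := (Measure.measurePreserving_neg (volume : Measure ℝ)).setLIntegral_comp_preimage_emb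
      (MeasurableEquiv.neg ℝ).measurableEmbedding f (Ioi 0)
    simpa [hf] using this
  rw [← lintegral_add_compl f (measurableSet_Ioi (a := (0:ℝ))), compl_Ioi,
    setLIntegral_congr Iio_ae_eq_Iic.symm, h_reflect, two_mul]

variable {f : ℝ → ℝ → ℝ≥0∞} {a b : ℝ}

lemma setLIntegral_setLIntegral_swap {s t : Set ℝ} (hf : Measurable (Function.uncurry f)) :
    ∫⁻ x in s, ∫⁻ y in t, f x y = ∫⁻ y in t, ∫⁻ x in s, f x y :=
  lintegral_lintegral_swap hf.aemeasurable

lemma measurable_setLIntegral_Ioo_right (hf : Measurable (Function.uncurry f)) :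
    Measurable fun x => ∫⁻ y in Ioo a x, f x y := by
  have h_ind : (fun x => ∫⁻ y in Ioo a x, f x y) =
      fun x => ∫⁻ y, {p : ℝ × ℝ | p.2 ∈ Ioo a p.1}.indicator (Function.uncurry f) (x, y) := by
    ext x
    rw [← lintegral_indicator measurableSet_Ioo]
    rfl
  rw [h_ind]
  refine Measurable.lintegral_prod_right' (hf.indicator ?_)
  exact (measurableSet_lt measurable_const measurable_snd).inter
    (measurableSet_lt measurable_snd measurable_fst)

lemma setLIntegral_Ioo_triangle_swap (hf : Measurable (Function.uncurry f)) :
    ∫⁻ x in Ioo a b, ∫⁻ y in Ioo a x, f x y = ∫⁻ y in Ioo a b, ∫⁻ x in Ioo y b, f x y := by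
  set T : ℝ → ℝ → ℝ≥0∞ := fun x y => {p : ℝ × ℝ | p.2 < p.1}.indicator (Function.uncurry f) (x, y)
  have h_left : ∀ x ∈ Ioo a b, ∫⁻ y in Ioo a x, f x y = ∫⁻ y in Ioo a b, T x y := by
    intro x hx
    rw [show T x = (Iio x).indicator (f x) from by ext y; simp [T, indicator, Function.uncurry],
      setLIntegral_indicator measurableSet_Iio, inter_comm, Ioo_inter_Iio, min_eq_right hx.2.le]
  have h_right : ∀ y ∈ Ioo a b, ∫⁻ x in Ioo y b, f x y = ∫⁻ x in Ioo a b, T x y := by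
    intro y hy
    rw [show (fun x => T x y) = (Ioi y).indicator (fun x => f x y) from by
        ext x; simp [T, indicator, Function.uncurry],
      setLIntegral_indicator measurableSet_Ioi, Ioi_inter_Ioo, max_eq_left hy.1.le]
  rw [setLIntegral_congr_fun measurableSet_Ioo h_left,
    setLIntegral_congr_fun measurableSet_Ioo h_right]
  exact setLIntegral_setLIntegral_swap
    (hf.indicator (measurableSet_lt measurable_snd measurable_fst))

lemma setLIntegral_Ioo_eq_add {g : ℝ → ℝ≥0∞} {c : ℝ} (hc : c ∈ Ioo a b) :
    ∫⁻ x in Ioo a b, g x = (∫⁻ x in Ioo a c, g x) + ∫⁻ x in Ioo c b, g x := by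
  have h_disj : Disjoint (Ioo a c) (Ioo c b) :=
    Set.disjoint_left.2 fun x hx hx' => lt_asymm hx.2 hx'.1
  rw [← lintegral_union measurableSet_Ioo h_disj]
  refine setLIntegral_congr ?_
  rw [← Ioc_union_Ioo_eq_Ioo hc.1.le hc.2]
  exact ae_eq_set_union Ioo_ae_eq_Ioc.symm ae_eq_rfl

lemma setLIntegral_triangle_add_triangle (hf : Measurable (Function.uncurry f)) :
    ∫⁻ x in Ioo a b, ((∫⁻ y in Ioo a x, f x y) + ∫⁻ y in Ioo a x, f y x) =
      ∫⁻ x in Ioo a b, ∫⁻ y in Ioo a b, f x y := by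
  have hf_swap : Measurable (Function.uncurry fun x y => f y x) := hf.comp measurable_swap
  rw [lintegral_add_left (measurable_setLIntegral_Ioo_right hf),
    setLIntegral_Ioo_triangle_swap hf_swap,
    ← lintegral_add_left (measurable_setLIntegral_Ioo_right hf)]
  exact setLIntegral_congr_fun measurableSet_Ioo fun x hx => (setLIntegral_Ioo_eq_add hx).symm

end SetLIntegral

section Derivatives

lemma hasDerivAt_div_sqrt_pow {c p : ℝ → ℝ} {c' p' s : ℝ} (hc : HasDerivAt c c' s)
    (hp : HasDerivAt p p' s) (hps : 0 < p s) (n : ℕ) :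
    HasDerivAt (fun s => c s / √(p s) ^ n)
      (c' / √(p s) ^ n - n / 2 * c s * p' / √(p s) ^ (n + 2)) s := by
  have h_ne : √(p s) ≠ 0 := (Real.sqrt_pos.2 hps).ne'
  refine (hc.fun_div ((hp.sqrt hps.ne').fun_pow n) (pow_ne_zero n h_ne)).congr_deriv ?_
  cases n with
  | zero => simp
  | succ m =>
    simp only [Nat.add_sub_cancel]
    field_simp
    ring

variable {a b : ℝ}

lemma hasDerivAt_intervalIntegral_mul {w : ℝ → ℝ} {F F' : ℝ → ℝ → ℝ} {x₀ : ℝ} {U : Set ℝ}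
    (hab : a ≤ b) (hU : U ∈ 𝓝 x₀) (hw : IntervalIntegrable w volume a b)
    (hF : ∀ x ∈ U, ContinuousOn (F x) (Icc a b))
    (hF' : ContinuousOn (Function.uncurry F') (U ×ˢ Icc a b))
    (hFF' : ∀ x ∈ U, ∀ s ∈ Icc a b, HasDerivAt (fun x => F x s) (F' x s) x) :
    HasDerivAt (fun x => ∫ s in a..b, w s * F x s) (∫ s in a..b, w s * F' x₀ s) x₀ := by
  obtain ⟨ε, hε, h_ball⟩ := Metric.nhds_basis_closedBall.mem_iff.1 hU
  obtain ⟨C, hC⟩ := ((isCompact_closedBall x₀ ε).prod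
    (isCompact_Icc (a := a) (b := b))).exists_bound_of_continuousOn
      (hF'.mono (prod_mono h_ball le_rfl))
  have hx₀ : x₀ ∈ U := mem_of_mem_nhds hU
  have h_sub : uIoc a b ⊆ Icc a b := by rw [uIoc_of_le hab]; exact Ioc_subset_Icc_self
  have hw_meas : AEStronglyMeasurable w (volume.restrict (uIoc a b)) := by
    rw [uIoc_of_le hab]; exact hw.1.aestronglyMeasurable
  have h_meas {f : ℝ → ℝ} (hf : ContinuousOn f (Icc a b)) :
      AEStronglyMeasurable (fun s => w s * f s) (volume.restrict (uIoc a b)) :=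
    hw_meas.mul ((hf.mono h_sub).aestronglyMeasurable measurableSet_uIoc)
  refine (intervalIntegral.hasDerivAt_integral_of_dominated_loc_of_deriv_le
    (bound := fun s => |w s| * C) (F := fun x s => w s * F x s) (F' := fun x s => w s * F' x s)
    (Metric.closedBall_mem_nhds x₀ hε) ?_ ?_ ?_ ?_ ?_ ?_).2
  · filter_upwards [hU] with x hx using h_meas (hF x hx)
  · exact hw.mul_continuousOn (by rw [uIcc_of_le hab]; exact hF x₀ hx₀)
  · exact h_meas (hF'.comp (f := fun s => (x₀, s)) (by fun_prop) fun s hs => ⟨hx₀, hs⟩)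
  · refine Eventually.of_forall fun s hs x hx => ?_
    rw [norm_mul]
    exact mul_le_mul_of_nonneg_left (hC (x, s) ⟨hx, h_sub hs⟩) (norm_nonneg _)
  · exact hw.abs.mul_const C
  · exact Eventually.of_forall fun s hs x hx =>
      (hFF' x (h_ball hx) s (h_sub hs)).const_mul (w s)

lemma hasDerivAt_intervalIntegral {F F' : ℝ → ℝ → ℝ} {x₀ : ℝ} {U : Set ℝ}
    (hab : a ≤ b) (hU : U ∈ 𝓝 x₀) (hF : ∀ x ∈ U, ContinuousOn (F x) (Icc a b))
    (hF' : ContinuousOn (Function.uncurry F') (U ×ˢ Icc a b))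
    (hFF' : ∀ x ∈ U, ∀ s ∈ Icc a b, HasDerivAt (fun x => F x s) (F' x s) x) :
    HasDerivAt (fun x => ∫ s in a..b, F x s) (∫ s in a..b, F' x₀ s) x₀ := by
  simpa using hasDerivAt_intervalIntegral_mul (w := fun _ => 1) hab hU (by simp) hF hF' hFF'

variable {f f' : ℝ → ℝ} {la lb : ℝ}

lemma integrableOn_Ioo_of_hasDerivAt_of_tendsto
    (hf : ∀ x ∈ Ioo a b, HasDerivAt f (f' x) x) (hf' : ∀ x ∈ Ioo a b, 0 ≤ f' x)
    (ha : Tendsto f (𝓝[>] a) (𝓝 la)) (hb : Tendsto f (𝓝[<] b) (𝓝 lb)) :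
    IntegrableOn f' (Ioo a b) := by
  have h_cont : ContinuousOn (extendFrom (Ioo a b) f) (Icc a b) :=
    continuousOn_Icc_extendFrom_Ioo
      (fun x hx => (hf x hx).continuousAt.continuousWithinAt) ha hb
  have h_deriv : ∀ x ∈ Ioo a b, HasDerivAt (extendFrom (Ioo a b) f) (f' x) x := fun x hx => by
    refine (hf x hx).congr_of_eventuallyEq ?_
    filter_upwards [Ioo_mem_nhds hx.1 hx.2] with z hz
    exact extendFrom_eq (subset_closure hz) (hf z hz).continuousAt.continuousWithinAt
  exact (intervalIntegral.integrableOn_deriv_of_nonneg h_cont h_deriv hf').mono_set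
    Ioo_subset_Ioc_self

lemma setLIntegral_ofReal_eq_sub_of_hasDerivAt_of_tendsto (hab : a < b)
    (hf : ∀ x ∈ Ioo a b, HasDerivAt f (f' x) x) (hf' : ∀ x ∈ Ioo a b, 0 ≤ f' x)
    (ha : Tendsto f (𝓝[>] a) (𝓝 la)) (hb : Tendsto f (𝓝[<] b) (𝓝 lb)) :
    ∫⁻ x in Ioo a b, ofReal (f' x) = ofReal (lb - la) := by
  have h_int := integrableOn_Ioo_of_hasDerivAt_of_tendsto hf hf' ha hb
  rw [← ofReal_integral_eq_lintegral_ofReal h_int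
      (ae_restrict_of_forall_mem measurableSet_Ioo hf'),
    ← integral_Ioc_eq_integral_Ioo, ← integral_of_le hab.le,
    integral_eq_sub_of_hasDerivAt_of_tendsto hab hf ?_ ha hb]
  rwa [intervalIntegrable_iff_integrableOn_Ioo_of_le hab.le]

lemma tendsto_nhdsGT_of_continuousOn_Icc (hab : a < b) (hf : ContinuousOn f (Icc a b)) :
    Tendsto f (𝓝[>] a) (𝓝 (f a)) := by
  rw [← nhdsWithin_Ioo_eq_nhdsGT hab]
  exact (hf a (left_mem_Icc.2 hab.le)).mono Ioo_subset_Icc_self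

lemma tendsto_nhdsLT_of_continuousOn_Icc (hab : a < b) (hf : ContinuousOn f (Icc a b)) :
    Tendsto f (𝓝[<] b) (𝓝 (f b)) := by
  rw [← nhdsWithin_Ioo_eq_nhdsLT hab]
  exact (hf b (right_mem_Icc.2 hab.le)).mono Ioo_subset_Icc_self

lemma eqOn_of_hasDerivAt_eq_zero {s : Set ℝ} {x₀ : ℝ} (hs : IsOpen s) (hs' : IsPreconnected s)
    (hx₀ : x₀ ∈ s) (hf : ∀ x ∈ s, HasDerivAt f 0 x) : EqOn f (fun _ => f x₀) s := fun _ hx =>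
  hs.is_const_of_deriv_eq_zero hs'
    (fun x hx => (hf x hx).differentiableAt.differentiableWithinAt)
    (fun x hx => (hf x hx).deriv) hx hx₀

-- The weighted Wronskian `p (y z' - y' z)` is constant, and it vanishes where `p` does.
lemma exists_eqOn_const_mul_of_hasDerivAt_mul_deriv {p q y y' z z' : ℝ → ℝ} {s t : Set ℝ} {x₀ : ℝ}
    (hs : IsOpen s) (hs' : IsPreconnected s) (ht : IsOpen t) (ht' : IsPreconnected t)
    (hts : t ⊆ s) (hx₀ : x₀ ∈ s) (hp₀ : p x₀ = 0) (hp : ∀ x ∈ t, p x ≠ 0) (hz₀ : ∀ x ∈ t, z x ≠ 0)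
    (hy : ∀ x ∈ s, HasDerivAt y (y' x) x)
    (hy' : ∀ x ∈ s, HasDerivAt (fun x => p x * y' x) (q x * y x) x)
    (hz : ∀ x ∈ s, HasDerivAt z (z' x) x)
    (hz' : ∀ x ∈ s, HasDerivAt (fun x => p x * z' x) (q x * z x) x) :
    ∃ A, EqOn y (fun x => A * z x) t := by
  have h_wronskian : EqOn (fun x => y x * (p x * z' x) - p x * y' x * z x) (fun _ => 0) s := by
    have h_const := eqOn_of_hasDerivAt_eq_zero hs hs' hx₀ (f := fun x =>
      y x * (p x * z' x) - p x * y' x * z x) fun x hx =>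
        (((hy x hx).fun_mul (hz' x hx)).fun_sub ((hy' x hx).fun_mul (hz x hx))).congr_deriv
          (by ring)
    simpa [hp₀] using h_const
  have h_quot : ∀ x ∈ t, HasDerivAt (fun x => y x / z x) 0 x := fun x hx => by
    refine ((hy x (hts hx)).fun_div (hz x (hts hx)) (hz₀ x hx)).congr_deriv ?_
    have h_zero : y' x * z x - y x * z' x = 0 :=
      mul_left_cancel₀ (hp x hx) (by linear_combination -(h_wronskian (hts hx)))
    rw [h_zero, zero_div]
  rcases t.eq_empty_or_nonempty with rfl | ⟨x₁, hx₁⟩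
  · exact ⟨0, eqOn_empty _ _⟩
  · exact ⟨y x₁ / z x₁, fun x hx =>
      (div_eq_iff (hz₀ x hx)).1 (eqOn_of_hasDerivAt_eq_zero ht ht' hx₁ h_quot hx)⟩

end Derivatives

/-- The complete elliptic integral `M(a, b) = ∫₀^∞ dx / √((x² + a²)(x² + b²))`, equal to `π / 2`
divided by the arithmetic-geometric mean of `a` and `b`. It is extended-nonnegative valued so that
it can be integrated over its parameters without integrability conditions. -/
noncomputable def agmIntegral (a b : ℝ) : ℝ≥0∞ :=
  ∫⁻ x in Ioi (0:ℝ), ofReal (1 / √((x ^ 2 + a ^ 2) * (x ^ 2 + b ^ 2)))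

section AgmIntegral

variable {a b c : ℝ}

lemma div_sqrt_sq_mul (hc : 0 < c) (x : ℝ) : c / √(c ^ 2 * x) = 1 / √x := by
  rw [Real.sqrt_mul (sq_nonneg c), Real.sqrt_sq hc.le, div_mul_eq_div_div, div_self hc.ne']

lemma agmIntegral_comm (a b : ℝ) : agmIntegral a b = agmIntegral b a := by
  simp only [agmIntegral, mul_comm]

@[fun_prop]
lemma measurable_agmIntegral {f g : ℝ → ℝ} (hf : Measurable f) (hg : Measurable g) :
    Measurable fun x => agmIntegral (f x) (g x) := by
  refine Measurable.lintegral_prod_right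
    (f := fun x v : ℝ => ofReal (1 / √((v ^ 2 + f x ^ 2) * (v ^ 2 + g x ^ 2)))) ?_
  unfold Function.uncurry
  fun_prop

lemma agmIntegral_mul_mul (hc : 0 < c) (a b : ℝ) :
    agmIntegral (c * a) (c * b) = ofReal (1 / c) * agmIntegral a b := by
  unfold agmIntegral
  rw [← setLIntegral_ofReal_const_mul (by positivity)]
  refine setLIntegral_ofReal_eq_of_bijOn (φ' := fun _ => c) measurableSet_Ioi
    (bijOn_mul_left_Ioi hc) (fun x _ => by simpa using (hasDerivAt_id x).const_mul c) fun x _ => ?_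
  rw [abs_of_pos hc, show ((c * x) ^ 2 + (c * a) ^ 2) * ((c * x) ^ 2 + (c * b) ^ 2)
      = (c ^ 2) ^ 2 * ((x ^ 2 + a ^ 2) * (x ^ 2 + b ^ 2)) by ring, Real.sqrt_mul (by positivity),
    Real.sqrt_sq (by positivity)]
  field_simp

lemma bijOn_const_mul_tan (hb : 0 < b) :
    BijOn (fun θ => b * tan θ) (Ioo 0 (π / 2)) (Ioi 0) := by
  refine InvOn.bijOn (f' := fun x => arctan (x / b)) ⟨fun θ hθ => ?_, fun x _ => ?_⟩ ?_ ?_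
  · simp only [mul_div_cancel_left₀ _ hb.ne']
    exact arctan_tan (by linarith [hθ.1, pi_pos]) hθ.2
  · simp only [tan_arctan, mul_div_cancel₀ _ hb.ne']
  · exact fun θ hθ => mul_pos hb (tan_pos_of_pos_of_lt_pi_div_two hθ.1 hθ.2)
  · exact fun x hx => ⟨arctan_pos.2 (div_pos hx hb), arctan_lt_pi_div_two _⟩

lemma agmIntegral_eq_setLIntegral_trig (a : ℝ) (hb : 0 < b) :
    agmIntegral a b =
      ∫⁻ θ in Ioo 0 (π / 2), ofReal (1 / √(a ^ 2 * cos θ ^ 2 + b ^ 2 * sin θ ^ 2)) := by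
  have h_cos : ∀ θ ∈ Ioo 0 (π / 2), 0 < cos θ := fun θ hθ =>
    cos_pos_of_mem_Ioo ⟨by linarith [hθ.1, pi_pos], hθ.2⟩
  refine setLIntegral_ofReal_eq_of_bijOn (φ' := fun θ => b * (1 / cos θ ^ 2)) measurableSet_Ioo
    (bijOn_const_mul_tan hb)
    (fun θ hθ => (hasDerivAt_tan (h_cos θ hθ).ne').const_mul b) fun θ hθ => ?_
  have hc := h_cos θ hθ
  have h_sc := sin_sq_add_cos_sq θ
  have h_factor : ((b * tan θ) ^ 2 + a ^ 2) * ((b * tan θ) ^ 2 + b ^ 2) =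
      (b * (1 / cos θ ^ 2)) ^ 2 * (a ^ 2 * cos θ ^ 2 + b ^ 2 * sin θ ^ 2) := by
    rw [tan_eq_sin_div_cos]
    field_simp
    linear_combination (a ^ 2 * cos θ ^ 2 + b ^ 2 * sin θ ^ 2) * h_sc
  rw [abs_of_pos (by positivity), mul_one_div, h_factor, div_sqrt_sq_mul (by positivity)]

lemma agmIntegral_self (ha : 0 < a) : agmIntegral a a = ofReal (π / (2 * a)) := by
  have h_const : ∀ θ, 1 / √(a ^ 2 * cos θ ^ 2 + a ^ 2 * sin θ ^ 2) = 1 / a := fun θ => by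
    rw [← mul_add, cos_sq_add_sin_sq, mul_one, Real.sqrt_sq ha.le]
  simp_rw [agmIntegral_eq_setLIntegral_trig a ha, h_const, setLIntegral_const, Real.volume_Ioo]
  rw [← ENNReal.ofReal_mul (by positivity)]
  congr 1
  field_simp
  ring

lemma add_sqrt_sq_add_pos (hc : 0 < c) (x : ℝ) : 0 < x + √(x ^ 2 + c) := by
  have h_abs : |x| < √(x ^ 2 + c) := by
    rw [← Real.sqrt_sq_eq_abs]
    exact Real.sqrt_lt_sqrt (sq_nonneg x) (by linarith)
  linarith [neg_abs_le x]

lemma bijOn_sub_div_div_two (hc : 0 < c) :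
    BijOn (fun v => (v - c / v) / 2) (Ioi 0) univ := by
  refine InvOn.bijOn (f' := fun x => x + √(x ^ 2 + c)) ⟨fun v hv => ?_, fun x _ => ?_⟩
    (mapsTo_univ _ _) fun x _ => add_sqrt_sq_add_pos hc x
  · have hv : 0 < v := hv
    beta_reduce
    rw [show ((v - c / v) / 2) ^ 2 + c = ((v + c / v) / 2) ^ 2 by field_simp; ring,
      Real.sqrt_sq (by positivity)]
    ring
  · have := add_sqrt_sq_add_pos hc x
    beta_reduce
    field_simp
    linear_combination Real.sq_sqrt (show 0 ≤ x ^ 2 + c by positivity)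

-- Gauss: the integrand of the left side is even, and `x = (v - a b / v) / 2` turns its integral
-- over the whole line into twice the right side.
lemma agmIntegral_sqrt_mul_add_div_two (ha : 0 < a) (hb : 0 < b) :
    agmIntegral (√(a * b)) ((a + b) / 2) = agmIntegral a b := by
  have hab : 0 < a * b := mul_pos ha hb
  refine (ENNReal.mul_right_inj two_ne_zero ENNReal.ofNat_ne_top).1 ?_
  unfold agmIntegral
  rw [← lintegral_eq_two_mul_of_even (f := fun x =>
      ofReal (1 / √((x ^ 2 + √(a * b) ^ 2) * (x ^ 2 + ((a + b) / 2) ^ 2)))) (by simp),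
    ← ENNReal.ofReal_ofNat, ← setLIntegral_ofReal_const_mul (by norm_num), ← setLIntegral_univ]
  refine setLIntegral_ofReal_eq_of_bijOn (φ' := fun v => (1 + a * b / v ^ 2) / 2) measurableSet_Ioi
    (bijOn_sub_div_div_two hab) (fun v hv => ?_) fun v hv => ?_
  · have hv : v ≠ 0 := ne_of_gt hv
    refine (((hasDerivAt_id v).fun_sub
      ((hasDerivAt_inv hv).const_mul (a * b))).div_const 2).congr_deriv ?_
    field_simp
    ring
  · have hv : 0 < v := hv
    rw [abs_of_pos (by positivity), Real.sq_sqrt hab.le,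
      show (((v - a * b / v) / 2) ^ 2 + a * b) * (((v - a * b / v) / 2) ^ 2 + ((a + b) / 2) ^ 2)
        = ((1 + a * b / v ^ 2) / 4) ^ 2 * ((v ^ 2 + a ^ 2) * (v ^ 2 + b ^ 2)) by field_simp; ring,
      Real.sqrt_mul (by positivity), Real.sqrt_sq (by positivity)]
    field_simp
    norm_num

lemma agmIntegral_le (ha : 0 < a) (hb : 0 < b) :
    agmIntegral a b ≤ ofReal (π / (2 * √(a * b))) := by
  have hab : 0 < √(a * b) := Real.sqrt_pos.2 (mul_pos ha hb)
  have h_amgm : √(a * b) ≤ (a + b) / 2 :=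
    Real.sqrt_le_iff.2 ⟨by positivity, by nlinarith [sq_nonneg (a - b)]⟩
  rw [← agmIntegral_sqrt_mul_add_div_two ha hb, ← agmIntegral_self hab,
    agmIntegral_comm, agmIntegral, agmIntegral]
  refine lintegral_mono fun x => ENNReal.ofReal_le_ofReal ?_
  have : 0 < x ^ 2 + √(a * b) ^ 2 := by positivity
  gcongr

lemma bijOn_sqrt_sq_sub_div (hb : 0 < b) (hb1 : b < 1) :
    BijOn (fun x => √((x ^ 2 - b ^ 2) / (1 - x ^ 2))) (Ioo b 1) (Ioi 0) := by
  have hb2 : 0 < 1 - b ^ 2 := by nlinarith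
  refine InvOn.bijOn (f' := fun y => √((y ^ 2 + b ^ 2) / (y ^ 2 + 1)))
    ⟨fun x hx => ?_, fun y hy => ?_⟩ (fun x hx => ?_) fun y hy => ?_
  · have hx1 : 0 < 1 - x ^ 2 := by nlinarith [hx.1, hx.2]
    have hxb : 0 < x ^ 2 - b ^ 2 := by nlinarith [hx.1, hx.2]
    simp only [Real.sq_sqrt (div_pos hxb hx1).le]
    rw [show ((x ^ 2 - b ^ 2) / (1 - x ^ 2) + b ^ 2) / ((x ^ 2 - b ^ 2) / (1 - x ^ 2) + 1)
        = x ^ 2 by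
      rw [div_add' _ _ _ hx1.ne', div_add' _ _ _ hx1.ne', div_div_div_cancel_right₀ hx1.ne',
        div_eq_iff (by nlinarith)]
      ring]
    exact Real.sqrt_sq (hb.trans hx.1).le
  · have hy1 : y ^ 2 + 1 ≠ 0 := by positivity
    simp only [Real.sq_sqrt (show 0 ≤ (y ^ 2 + b ^ 2) / (y ^ 2 + 1) by positivity)]
    rw [show ((y ^ 2 + b ^ 2) / (y ^ 2 + 1) - b ^ 2) / (1 - (y ^ 2 + b ^ 2) / (y ^ 2 + 1))
        = y ^ 2 by
      rw [div_sub' hy1, sub_div' hy1, div_div_div_cancel_right₀ hy1, div_eq_iff (by nlinarith)]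
      ring]
    exact Real.sqrt_sq (mem_Ioi.1 hy).le
  · exact Real.sqrt_pos.2 (div_pos (by nlinarith [hx.1]) (by nlinarith [hx.1, hx.2]))
  · have hy : 0 < y := hy
    constructor
    · apply Real.lt_sqrt_of_sq_lt
      rw [lt_div_iff₀ (by positivity)]
      nlinarith [mul_pos (pow_pos hy 2) hb2]
    · rw [Real.sqrt_lt' one_pos, div_lt_iff₀ (by positivity)]
      nlinarith

lemma agmIntegral_one_eq_setLIntegral (hb : 0 < b) (hb1 : b < 1) :
    agmIntegral 1 b = ∫⁻ x in Ioo b 1, ofReal (1 / √((1 - x ^ 2) * (x ^ 2 - b ^ 2))) := by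
  have hb2 : 0 < 1 - b ^ 2 := by nlinarith
  have h_pos : ∀ x ∈ Ioo b 1, 0 < x ∧ 0 < 1 - x ^ 2 ∧ 0 < x ^ 2 - b ^ 2 := fun x hx =>
    ⟨hb.trans hx.1, by nlinarith [hx.1, hx.2], by nlinarith [hx.1, hx.2]⟩
  refine setLIntegral_ofReal_eq_of_bijOn (φ' := fun x =>
      x * (1 - b ^ 2) / (1 - x ^ 2) ^ 2 / √((x ^ 2 - b ^ 2) / (1 - x ^ 2))) measurableSet_Ioo
    (bijOn_sqrt_sq_sub_div hb hb1) (fun x hx => ?_) fun x hx => ?_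
  · obtain ⟨_, hx1, hxb⟩ := h_pos x hx
    refine ((((hasDerivAt_pow 2 x).sub_const (b ^ 2)).fun_div
      ((hasDerivAt_pow 2 x).const_sub 1) hx1.ne').sqrt (div_pos hxb hx1).ne').congr_deriv ?_
    have := (Real.sqrt_pos.2 (div_pos hxb hx1)).ne'
    field_simp
    push_cast
    ring
  · obtain ⟨hx0, hx1, hxb⟩ := h_pos x hx
    rw [abs_of_pos (by positivity), mul_one_div, Real.sq_sqrt (by positivity), div_div,
      ← Real.sqrt_mul (by positivity),
      show (x ^ 2 - b ^ 2) / (1 - x ^ 2) *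
          (((x ^ 2 - b ^ 2) / (1 - x ^ 2) + 1 ^ 2) * ((x ^ 2 - b ^ 2) / (1 - x ^ 2) + b ^ 2)) =
        (x * (1 - b ^ 2) / (1 - x ^ 2) ^ 2) ^ 2 * ((1 - x ^ 2) * (x ^ 2 - b ^ 2)) by
          field_simp; ring,
      div_sqrt_sq_mul (by positivity)]

end AgmIntegral

section EllipticK

lemma one_sub_sq_mul_sin_sq_pos {k : ℝ} (hk : k ^ 2 < 1) (θ : ℝ) : 0 < 1 - k ^ 2 * sin θ ^ 2 := by
  nlinarith [sin_sq_le_one θ, sq_nonneg k, sq_nonneg (sin θ)]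

lemma ellipticK_nonneg (k : ℝ) : 0 ≤ ellipticK k :=
  intervalIntegral.integral_nonneg (by positivity) fun _ _ => by positivity

lemma ofReal_ellipticK {k : ℝ} (hk : k ^ 2 < 1) :
    ofReal (ellipticK k) = ∫⁻ θ in Ioo 0 (π / 2), ofReal (1 / √(1 - k ^ 2 * sin θ ^ 2)) := by
  refine ofReal_intervalIntegral_eq_setLIntegral (by positivity) (Continuous.continuousOn ?_)
    fun _ _ => by positivity
  exact continuous_const.div (by fun_prop) fun θ =>
    (Real.sqrt_pos.2 (one_sub_sq_mul_sin_sq_pos hk θ)).ne'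

lemma ofReal_ellipticK_eq_agmIntegral {k : ℝ} (hk : k ^ 2 < 1) :
    ofReal (ellipticK k) = agmIntegral 1 (√(1 - k ^ 2)) := by
  rw [ofReal_ellipticK hk,
    agmIntegral_eq_setLIntegral_trig 1 (Real.sqrt_pos.2 (sub_pos.2 hk))]
  congr with θ
  rw [Real.sq_sqrt (sub_nonneg.2 hk.le), cos_sq']
  ring_nf

end EllipticK

section Substitutions

lemma bijOn_pow_Ioo {n : ℕ} (hn : n ≠ 0) : BijOn (fun x : ℝ => x ^ n) (Ioo 0 1) (Ioo 0 1) :=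
  InvOn.bijOn (f' := fun x : ℝ => x ^ (n⁻¹ : ℝ))
    ⟨fun _ hx => Real.pow_rpow_inv_natCast hx.1.le hn,
      fun _ hx => Real.rpow_inv_natCast_pow hx.1.le hn⟩
    (fun _ hx => ⟨pow_pos hx.1 n, pow_lt_one₀ hx.1.le hx.2 hn⟩)
    (fun _ hx => ⟨Real.rpow_pos_of_pos hx.1 _, Real.rpow_lt_one hx.1.le hx.2 (by positivity)⟩)

lemma bijOn_one_sub_div_one_add :
    BijOn (fun x : ℝ => (1 - x) / (1 + x)) (Ioo 0 1) (Ioo 0 1) := by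
  have h_maps : MapsTo (fun x : ℝ => (1 - x) / (1 + x)) (Ioo 0 1) (Ioo 0 1) := fun x hx => by
    have h_pos : 0 < 1 + x := by linarith [hx.1]
    exact ⟨div_pos (by linarith [hx.2]) h_pos, by rw [div_lt_one h_pos]; linarith [hx.1]⟩
  have h_inv : LeftInvOn (fun x : ℝ => (1 - x) / (1 + x)) (fun x : ℝ => (1 - x) / (1 + x))
      (Ioo 0 1) := fun x hx => by
    have h_pos : 0 < 1 + x := by linarith [hx.1]
    beta_reduce
    rw [show 1 + (1 - x) / (1 + x) = 2 / (1 + x) by field_simp; ring]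
    field_simp
    ring
  exact InvOn.bijOn ⟨h_inv, h_inv⟩ h_maps h_maps

lemma bijOn_two_mul_sub_one : BijOn (fun x : ℝ => 2 * x - 1) (Ioo 0 1) (Ioo (-1) 1) :=
  InvOn.bijOn (f' := fun y => (y + 1) / 2)
    ⟨fun x _ => by ring, fun y _ => by ring⟩
    (fun _ hx => ⟨by linarith [hx.1], by linarith [hx.2]⟩)
    (fun _ hx => ⟨by linarith [hx.1], by linarith [hx.2]⟩)

lemma bijOn_sin_Ioo : BijOn sin (Ioo 0 (π / 2)) (Ioo 0 1) :=
  InvOn.bijOn (f' := arcsin)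
    ⟨fun θ hθ => arcsin_sin (by linarith [hθ.1, pi_pos]) hθ.2.le,
      fun x hx => sin_arcsin (by linarith [hx.1]) hx.2.le⟩
    (fun θ hθ => ⟨sin_pos_of_pos_of_lt_pi hθ.1 (by linarith [hθ.2, pi_pos]), by
      simpa using sin_lt_sin_of_lt_of_le_pi_div_two (by linarith [hθ.1, pi_pos]) le_rfl hθ.2⟩)
    (fun x hx => ⟨arcsin_pos.2 hx.1, arcsin_lt_pi_div_two.2 hx.2⟩)

lemma bijOn_cos_two_mul : BijOn (fun θ => cos (2 * θ)) (Ioo 0 (π / 2)) (Ioo (-1) 1) := by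
  refine InvOn.bijOn (f' := fun x => arccos x / 2) ⟨fun θ hθ => ?_, fun x hx => ?_⟩
    (fun θ hθ => ?_) fun x hx => ?_
  · beta_reduce
    rw [arccos_cos (by linarith [hθ.1]) (by linarith [hθ.2]), mul_div_cancel_left₀ _ two_ne_zero]
  · simp only [mul_div_cancel₀ _ (two_ne_zero (α := ℝ)), cos_arccos hx.1.le hx.2.le]
  · have h_cos : 0 < cos θ := cos_pos_of_mem_Ioo ⟨by linarith [hθ.1, pi_pos], hθ.2⟩
    have h_sin : 0 < sin θ := sin_pos_of_pos_of_lt_pi hθ.1 (by linarith [hθ.2, pi_pos])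
    rw [mem_Ioo, cos_two_mul]
    constructor <;> nlinarith [sin_sq_add_cos_sq θ]
  · exact ⟨half_pos (arccos_pos.2 hx.2), div_lt_div_of_pos_right (arccos_lt_pi.2 hx.1) two_pos⟩

lemma bijOn_one_div_sub_self : BijOn (fun x : ℝ => 1 / x - x) (Ioo 0 1) (Ioi 0) := by
  refine InvOn.bijOn (f' := fun v => (√(v ^ 2 + 4) - v) / 2) ⟨fun x hx => ?_, fun v _ => ?_⟩
    (fun x hx => ?_) fun v hv => ?_
  · have hx0 := hx.1
    beta_reduce
    rw [show (1 / x - x) ^ 2 + 4 = (1 / x + x) ^ 2 by field_simp; ring,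
      Real.sqrt_sq (by positivity)]
    ring
  · have h_ne : √(v ^ 2 + 4) - v ≠ 0 := by
      have := Real.lt_sqrt_of_sq_lt (show v ^ 2 < v ^ 2 + 4 by linarith)
      linarith
    beta_reduce
    field_simp
    linear_combination -Real.sq_sqrt (show 0 ≤ v ^ 2 + 4 by positivity)
  · have : 1 < 1 / x := (one_lt_div hx.1).2 hx.2
    exact mem_Ioi.2 (by linarith [hx.2])
  · have hv : 0 < v := hv
    have h_lower : v < √(v ^ 2 + 4) := Real.lt_sqrt_of_sq_lt (by linarith)
    have h_upper : √(v ^ 2 + 4) < v + 2 := by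
      rw [Real.sqrt_lt' (by linarith)]
      nlinarith
    constructor <;> linarith

end Substitutions

/-- The distance `√(1 - 2 r x + r²)`, whose inverse is the generating function `∑ rⁿ Pₙ(x)` of the
Legendre polynomials. -/
noncomputable def legendreRadius (r x : ℝ) : ℝ := √(1 - 2 * r * x + r ^ 2)

/-- The multiple `√2 π P₋₁⸝₄(-x)` of a Legendre function of degree `-1/4`, for `x < 1`; the
integral representation is chosen so as to be regular at `-1` and logarithmic at `1`. -/
noncomputable def legendreQuarter (x : ℝ) : ℝ :=
  ∫ σ in (0:ℝ)..1, 4 * (1 + σ ^ 2) / legendreRadius (σ ^ 4) x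

section LegendreQuarter

variable {r x t z : ℝ}

lemma legendreRadius_arg_pos (hr : 0 ≤ r) (hx : x < 1) : 0 < 1 - 2 * r * x + r ^ 2 := by
  rcases hr.eq_or_lt with rfl | hr
  · norm_num
  · nlinarith [sq_nonneg (1 - r), mul_pos hr (sub_pos.2 hx)]

lemma legendreRadius_sq (h : 0 < 1 - 2 * r * x + r ^ 2) :
    legendreRadius r x ^ 2 = 1 - 2 * r * x + r ^ 2 := Real.sq_sqrt h.le

lemma legendreRadius_pos (h : 0 < 1 - 2 * r * x + r ^ 2) : 0 < legendreRadius r x :=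
  Real.sqrt_pos.2 h

lemma continuous_uncurry_legendreRadius : Continuous (Function.uncurry legendreRadius) := by
  unfold Function.uncurry legendreRadius
  fun_prop

@[fun_prop]
lemma measurable_legendreRadius {α : Type*} [MeasurableSpace α] {f g : α → ℝ} (hf : Measurable f)
    (hg : Measurable g) : Measurable fun a => legendreRadius (f a) (g a) :=
  continuous_uncurry_legendreRadius.measurable.comp (hf.prodMk hg)

@[fun_prop]
lemma continuous_legendreRadius {α : Type*} [TopologicalSpace α] {f g : α → ℝ} (hf : Continuous f)
    (hg : Continuous g) : Continuous fun a => legendreRadius (f a) (g a) :=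
  continuous_uncurry_legendreRadius.comp (hf.prodMk hg)

lemma legendreQuarter_nonneg (x : ℝ) : 0 ≤ legendreQuarter x :=
  intervalIntegral.integral_nonneg zero_le_one fun _ _ =>
    div_nonneg (by positivity) (Real.sqrt_nonneg _)

lemma ofReal_legendreQuarter (hx : x < 1) : ofReal (legendreQuarter x) =
    ∫⁻ σ in Ioo 0 1, ofReal (4 * (1 + σ ^ 2) / legendreRadius (σ ^ 4) x) := by
  refine ofReal_intervalIntegral_eq_setLIntegral zero_le_one (Continuous.continuousOn ?_)
    fun _ _ => div_nonneg (by positivity) (Real.sqrt_nonneg _)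
  exact Continuous.div (by fun_prop) (by fun_prop) fun σ =>
    (legendreRadius_pos (legendreRadius_arg_pos (by positivity) hx)).ne'

lemma ofReal_two_mul_sqrt_two_mul_agmIntegral (a b : ℝ) :
    ofReal (2 * √2) * agmIntegral a b = ofReal 4 * agmIntegral (√2 * a) (√2 * b) := by
  rw [agmIntegral_mul_mul (by positivity), ← mul_assoc, ← ENNReal.ofReal_mul (by norm_num)]
  congr 2
  field_simp
  norm_num

lemma ofReal_legendreQuarter_two_mul_sq_sub_one (hz : z ∈ Ico 0 1) :
    ofReal (legendreQuarter (2 * z ^ 2 - 1)) =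
      ofReal (2 * √2) * agmIntegral (√(1 + z)) (√(1 - z)) := by
  obtain ⟨hz0, hz1⟩ := hz
  rw [ofReal_legendreQuarter (by nlinarith), ofReal_two_mul_sqrt_two_mul_agmIntegral,
    ← Real.sqrt_mul zero_le_two, ← Real.sqrt_mul zero_le_two, agmIntegral,
    ← setLIntegral_ofReal_const_mul (by norm_num)]
  symm
  refine setLIntegral_ofReal_eq_of_bijOn (φ' := fun σ => -(1 / σ ^ 2) - 1) measurableSet_Ioo
    bijOn_one_div_sub_self (fun σ hσ => ?_) fun σ hσ => ?_
  · simpa [one_div] using (hasDerivAt_inv hσ.1.ne').fun_sub (hasDerivAt_id σ)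
  · have hσ0 := hσ.1
    have h_radius : 1 - 2 * σ ^ 4 * (2 * z ^ 2 - 1) + (σ ^ 4) ^ 2 =
        (σ ^ 2) ^ 2 * (((1 / σ - σ) ^ 2 + 2 * (1 + z)) * ((1 / σ - σ) ^ 2 + 2 * (1 - z))) := by
      field_simp
      ring
    rw [abs_of_neg (by linarith [show 0 < 1 / σ ^ 2 by positivity]), legendreRadius, h_radius,
      Real.sq_sqrt (by linarith), Real.sq_sqrt (by linarith), Real.sqrt_mul (sq_nonneg _),
      Real.sqrt_sq (by positivity)]
    field_simp
    ring

lemma legendreQuarter_eq_mul_ellipticK_sqrt_one_sub (ht : t ∈ Ioo 0 1) :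
    legendreQuarter (2 * ((1 - t) / (1 + t)) ^ 2 - 1) = 2 * √(1 + t) * ellipticK (√(1 - t)) := by
  have ht_pos : 0 < 1 + t := by linarith [ht.1]
  have ht0 : 0 ≤ 1 - t := by linarith [ht.2]
  refine (ENNReal.ofReal_eq_ofReal_iff (legendreQuarter_nonneg _)
    (mul_nonneg (by positivity) (ellipticK_nonneg _))).1 ?_
  rw [ofReal_legendreQuarter_two_mul_sq_sub_one (Ioo_subset_Ico_self
      (bijOn_one_sub_div_one_add.mapsTo ht)), ENNReal.ofReal_mul (q := ellipticK _) (by positivity),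
    ofReal_ellipticK_eq_agmIntegral (by rw [Real.sq_sqrt ht0]; linarith [ht.1]), Real.sq_sqrt ht0,
    sub_sub_cancel, show 1 + (1 - t) / (1 + t) = 2 / (1 + t) by field_simp; ring,
    show 1 - (1 - t) / (1 + t) = 2 / (1 + t) * t by field_simp; ring, Real.sqrt_mul (by positivity),
    show agmIntegral √(2 / (1 + t)) (√(2 / (1 + t)) * √t) =
      agmIntegral (√(2 / (1 + t)) * 1) (√(2 / (1 + t)) * √t) by rw [mul_one],
    agmIntegral_mul_mul (by positivity), ← mul_assoc, ← ENNReal.ofReal_mul (by positivity),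
    Real.sqrt_div zero_le_two]
  congr 2
  field_simp

lemma agmIntegral_one_add_one_sub {k : ℝ} (hk : k ∈ Ioo (-1) 1) :
    agmIntegral (1 + k) (1 - k) = ofReal (ellipticK k) := by
  rw [ofReal_ellipticK_eq_agmIntegral (by nlinarith [hk.1, hk.2]),
    ← agmIntegral_sqrt_mul_add_div_two (by linarith [hk.1]) (by linarith [hk.2]), agmIntegral_comm]
  congr 1
  · ring
  · ring_nf

lemma legendreQuarter_neg_eq_mul_ellipticK_sqrt (ht : t ∈ Ioo 0 1) :
    legendreQuarter (-(2 * ((1 - t) / (1 + t)) ^ 2 - 1)) =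
      2 * √2 * √(1 + t) * ellipticK (√t) := by
  have ht_pos : 0 < 1 + t := by linarith [ht.1]
  have h_sq := Real.sq_sqrt ht.1.le
  have hs0 : 0 < √t := Real.sqrt_pos.2 ht.1
  have hs1 : √t < 1 := by rw [Real.sqrt_lt' one_pos]; linarith [ht.2]
  have h_lt : 2 * √t / (1 + t) < 1 := by
    rw [div_lt_one ht_pos]
    nlinarith [mul_pos (sub_pos.2 hs1) (sub_pos.2 hs1)]
  refine (ENNReal.ofReal_eq_ofReal_iff (legendreQuarter_nonneg _)
    (mul_nonneg (by positivity) (ellipticK_nonneg _))).1 ?_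
  rw [show -(2 * ((1 - t) / (1 + t)) ^ 2 - 1) = 2 * (2 * √t / (1 + t)) ^ 2 - 1 by
      field_simp; rw [h_sq]; ring,
    ofReal_legendreQuarter_two_mul_sq_sub_one ⟨by positivity, h_lt⟩,
    ENNReal.ofReal_mul (q := ellipticK _) (by positivity),
    ← agmIntegral_one_add_one_sub ⟨by linarith, hs1⟩,
    show 1 + 2 * √t / (1 + t) = (1 + √t) ^ 2 / (1 + t) by field_simp; linear_combination -h_sq,
    show 1 - 2 * √t / (1 + t) = (1 - √t) ^ 2 / (1 + t) by field_simp; linear_combination -h_sq,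
    Real.sqrt_div (by positivity), Real.sqrt_div (by positivity), Real.sqrt_sq (by linarith),
    Real.sqrt_sq (by linarith), div_eq_inv_mul, div_eq_inv_mul, agmIntegral_mul_mul (by positivity),
    ← mul_assoc, ← ENNReal.ofReal_mul (by positivity), one_div, inv_inv]

lemma setLIntegral_legendreQuarter_sq_mul_neg :
    ∫⁻ x in Ioo (-1) 1, ofReal (legendreQuarter x ^ 2 * legendreQuarter (-x)) =
      ofReal (16 * √2) * ∫⁻ t in Ioo 0 1, ofReal (4 * ((1 - t) * ellipticK (√(1 - t)) ^ 2 *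
        ellipticK (√t) / (1 + t) ^ ((3:ℝ) / 2))) := by
  rw [← setLIntegral_ofReal_const_mul (by positivity)]
  refine setLIntegral_ofReal_eq_of_bijOn (φ' := fun t => -(8 * (1 - t) / (1 + t) ^ 3))
    measurableSet_Ioo
    ((bijOn_two_mul_sub_one.comp (bijOn_pow_Ioo two_ne_zero)).comp bijOn_one_sub_div_one_add)
    (fun t ht => ?_) fun t ht => ?_
  · have ht_ne : 1 + t ≠ 0 := by linarith [ht.1]
    refine ((((((hasDerivAt_id t).const_sub 1).fun_div ((hasDerivAt_id t).const_add 1)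
      ht_ne).fun_pow 2).const_mul 2).sub_const 1).congr_deriv ?_
    simp only [id]
    field_simp
    push_cast
    field_simp
    ring
  · have ht_pos : 0 < 1 + t := by linarith [ht.1]
    have h_four : √(1 + t) ^ 4 = (1 + t) ^ 2 := by
      rw [show √(1 + t) ^ 4 = (√(1 + t) ^ 2) ^ 2 by ring, Real.sq_sqrt ht_pos.le]
    have h_jac : 0 ≤ 8 * (1 - t) / (1 + t) ^ 3 := div_nonneg (by linarith [ht.2]) (by positivity)
    simp only [Function.comp_apply]
    rw [legendreQuarter_eq_mul_ellipticK_sqrt_one_sub ht,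
      legendreQuarter_neg_eq_mul_ellipticK_sqrt ht, abs_neg, abs_of_nonneg h_jac,
      show (3:ℝ) / 2 = 1 + 1 / 2 by norm_num, Real.rpow_add ht_pos, Real.rpow_one,
      ← Real.sqrt_eq_rpow]
    field_simp
    rw [h_four]
    ring

end LegendreQuarter

section Beta

lemma sqrt_two_mul_Gamma_mul_Gamma :
    √2 * (Real.Gamma (1/8) * Real.Gamma (3/8) * (Real.Gamma (7/8) * Real.Gamma (5/8))) =
      4 * π ^ 2 := by
  have h_refl_one : Real.Gamma (1/8) * Real.Gamma (7/8) = π / sin (π / 8) := by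
    convert Real.Gamma_mul_Gamma_one_sub (1/8) using 3 <;> ring
  have h_refl_three : Real.Gamma (3/8) * Real.Gamma (5/8) = π / cos (π / 8) := by
    rw [← sin_pi_div_two_sub]
    convert Real.Gamma_mul_Gamma_one_sub (3/8) using 3 <;> ring
  have h_sin : 0 < sin (π / 8) := sin_pos_of_pos_of_lt_pi (by positivity) (by linarith [pi_pos])
  have h_cos : 0 < cos (π / 8) :=
    cos_pos_of_mem_Ioo ⟨by linarith [pi_pos], by linarith [pi_pos]⟩
  have h_double : √2 = 4 * (sin (π / 8) * cos (π / 8)) := by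
    have := sin_two_mul (π / 8)
    rw [show 2 * (π / 8) = π / 4 by ring, sin_pi_div_four] at this
    linarith
  calc √2 * (Real.Gamma (1/8) * Real.Gamma (3/8) * (Real.Gamma (7/8) * Real.Gamma (5/8)))
      = √2 * ((Real.Gamma (1/8) * Real.Gamma (7/8)) * (Real.Gamma (3/8) * Real.Gamma (5/8))) := by
        ring
    _ = 4 * π ^ 2 := by
        rw [h_refl_one, h_refl_three, h_double]
        field_simp

lemma setLIntegral_pow_div_sqrt_one_sub_pow (n : ℕ) {m : ℕ} (hm : m ≠ 0) {α : ℝ}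
    (hα : m * α = n + 1) :
    ∫⁻ x in Ioo 0 1, ofReal (x ^ n / √(1 - x ^ m)) =
      ofReal (Real.Gamma α * √π / (m * Real.Gamma (α + 1/2))) := by
  have hm_pos : 0 < (m : ℝ) := by positivity
  have hα0 : 0 < α := pos_of_mul_pos_right (hα ▸ by positivity : 0 < (m : ℝ) * α) hm_pos.le
  set B := ProbabilityTheory.beta α (1/2) with hB
  have hB_pos : 0 < B := ProbabilityTheory.beta_pos hα0 one_half_pos
  have h_density : ∫⁻ x in Ioo 0 1, ofReal (1 / B * x ^ (α - 1) * (1 - x) ^ ((1:ℝ)/2 - 1)) = 1 := by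
    rw [hB, ← ProbabilityTheory.lintegral_betaPDF]
    exact ProbabilityTheory.lintegral_betaPDF_eq_one hα0 one_half_pos
  have h_subst : ∫⁻ x in Ioo 0 1, ofReal (1 / B * x ^ (α - 1) * (1 - x) ^ ((1:ℝ)/2 - 1)) =
      ∫⁻ x in Ioo 0 1, ofReal (m / B * (x ^ n / √(1 - x ^ m))) := by
    refine setLIntegral_ofReal_eq_of_bijOn measurableSet_Ioo (bijOn_pow_Ioo hm)
      (fun x _ => hasDerivAt_pow m x) fun x hx => ?_
    have hx0 := hx.1
    have hx1 : x ^ m < 1 := pow_lt_one₀ hx.1.le hx.2 hm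
    have h_exp : x ^ (m - 1) * (x ^ m) ^ (α - 1) = x ^ n := by
      rw [← Real.rpow_natCast x m, ← Real.rpow_mul hx0.le, ← Real.rpow_natCast,
        ← Real.rpow_natCast, ← Real.rpow_add hx0, Nat.cast_pred (Nat.pos_of_ne_zero hm)]
      congr 1
      linarith
    rw [abs_of_pos (by positivity), show (1:ℝ)/2 - 1 = -(1/2) by norm_num,
      Real.rpow_neg (by linarith), ← Real.sqrt_eq_rpow, ← h_exp]
    ring
  rw [h_subst, setLIntegral_ofReal_const_mul (by positivity)] at h_density
  rw [show Real.Gamma α * √π / (m * Real.Gamma (α + 1/2)) = B / m by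
      rw [hB, ProbabilityTheory.beta, Real.Gamma_one_half_eq]; field_simp,
    ← mul_one (ofReal (B / m)), ← h_density, ← mul_assoc, ← ENNReal.ofReal_mul (by positivity),
    show B / m * (m / B) = 1 by field_simp, ENNReal.ofReal_one, one_mul]

end Beta

/-- The moments `∫₀¹ (1 + c σ²) K(σ⁴) dσ` of the elliptic integral; the two cases `c = ±1` occur. -/
noncomputable def ellipticKMoment (c : ℝ) : ℝ≥0∞ :=
  ∫⁻ σ in Ioo (0:ℝ) 1, ofReal (1 + c * σ ^ 2) * ofReal (ellipticK (σ ^ 4))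

/-- The moments `∫₀¹ M(1, h) / √(1 + c h) dh` of `M = agmIntegral`, linking the two cases `c = ±1`
of `ellipticKMoment c`. -/
noncomputable def agmMoment (c : ℝ) : ℝ≥0∞ :=
  ∫⁻ h in Ioo (0:ℝ) 1, ofReal (1 / √(1 + c * h)) * agmIntegral 1 h

/-- The integral `∫₀¹ M(√(1 + x), √(1 - x)) / √(1 - x²) dx` of `M = agmIntegral` against the
Chebyshev weight. -/
noncomputable def chebyshevAgmIntegral : ℝ≥0∞ :=
  ∫⁻ x in Ioo (0:ℝ) 1, ofReal (1 / √(1 - x ^ 2)) * agmIntegral (√(1 + x)) (√(1 - x))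

section Moments

lemma ofReal_ellipticK_eq_setLIntegral_jacobi {k : ℝ} (hk : k ^ 2 < 1) : ofReal (ellipticK k) =
    ∫⁻ w in Ioo 0 1, ofReal (1 / √(1 - w ^ 2) / √(1 - k ^ 2 * w ^ 2)) := by
  rw [ofReal_ellipticK hk]
  symm
  refine setLIntegral_ofReal_eq_of_bijOn measurableSet_Ioo bijOn_sin_Ioo
    (fun θ _ => hasDerivAt_sin θ) fun θ hθ => ?_
  have h_cos : 0 < cos θ := cos_pos_of_mem_Ioo ⟨by linarith [hθ.1, pi_pos], hθ.2⟩
  rw [← cos_sq', Real.sqrt_sq h_cos.le, abs_of_pos h_cos]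
  field_simp

lemma ofReal_ellipticK_pow_four {σ : ℝ} (hσ : σ ∈ Ioo 0 1) : ofReal (ellipticK (σ ^ 4)) =
    ∫⁻ ξ in Ioo 0 1, ofReal (4 * ξ ^ 3 / √(1 - ξ ^ 8) / √(1 - σ ^ 8 * ξ ^ 8)) := by
  have h_lt : (σ ^ 4) ^ 2 < 1 := by
    rw [← pow_mul]
    exact pow_lt_one₀ hσ.1.le hσ.2 (by norm_num)
  rw [ofReal_ellipticK_eq_setLIntegral_jacobi h_lt]
  refine setLIntegral_ofReal_eq_of_bijOn measurableSet_Ioo (bijOn_pow_Ioo four_ne_zero)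
    (fun ξ _ => hasDerivAt_pow 4 ξ) fun ξ hξ => ?_
  have hξ0 := hξ.1
  rw [abs_of_pos (by positivity)]
  norm_num [← pow_mul]
  ring

-- After `w = σ ξ` the `σ`-integral becomes an integral over the triangle `w < ξ` of a sum of two
-- terms exchanged by the reflection in the diagonal; together they fill the square.
lemma ellipticKMoment_one_eq_mul :
    ellipticKMoment 1 = ofReal 4 * ((∫⁻ ξ in Ioo 0 1, ofReal (ξ ^ 2 / √(1 - ξ ^ 8))) *
      ∫⁻ ξ in Ioo 0 1, ofReal (ξ ^ 0 / √(1 - ξ ^ 8))) := by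
  set F : ℝ → ℝ → ℝ≥0∞ := fun ξ w =>
    ofReal (4 * (ξ ^ 2 / √(1 - ξ ^ 8)) * (w ^ 0 / √(1 - w ^ 8))) with hF
  have hF_meas : Measurable (Function.uncurry F) := by
    unfold Function.uncurry
    fun_prop
  have h_double : ellipticKMoment 1 = ∫⁻ σ in Ioo 0 1, ∫⁻ ξ in Ioo 0 1,
      ofReal ((1 + 1 * σ ^ 2) * (4 * ξ ^ 3 / √(1 - ξ ^ 8) / √(1 - σ ^ 8 * ξ ^ 8))) := by
    refine setLIntegral_congr_fun measurableSet_Ioo fun σ hσ => ?_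
    rw [ofReal_ellipticK_pow_four hσ, setLIntegral_ofReal_const_mul (by positivity)]
  have h_triangle : ∀ ξ ∈ Ioo (0:ℝ) 1, ∫⁻ σ in Ioo 0 1,
      ofReal ((1 + 1 * σ ^ 2) * (4 * ξ ^ 3 / √(1 - ξ ^ 8) / √(1 - σ ^ 8 * ξ ^ 8))) =
      (∫⁻ w in Ioo 0 ξ, F ξ w) + ∫⁻ w in Ioo 0 ξ, F w ξ := by
    intro ξ hξ
    have hξ0 := hξ.1
    rw [← lintegral_add_left (by fun_prop), setLIntegral_Ioo_eq_mul_left hξ0,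
      ← lintegral_const_mul' _ _ ENNReal.ofReal_ne_top]
    congr with s
    simp only [hF]
    rw [← ENNReal.ofReal_add (by positivity) (by positivity), ← ENNReal.ofReal_mul hξ0.le,
      mul_pow ξ s 8, mul_comm (ξ ^ 8)]
    ring_nf
  have h_inner : ∀ ξ : ℝ, ∫⁻ w in Ioo 0 1, F ξ w = ofReal 4 * (ofReal (ξ ^ 2 / √(1 - ξ ^ 8)) *
      ∫⁻ w in Ioo 0 1, ofReal (w ^ 0 / √(1 - w ^ 8))) := fun ξ => by
    rw [setLIntegral_ofReal_const_mul (by positivity), ENNReal.ofReal_mul (by norm_num), mul_assoc]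
  rw [h_double, setLIntegral_setLIntegral_swap (by unfold Function.uncurry; fun_prop),
    setLIntegral_congr_fun measurableSet_Ioo h_triangle, setLIntegral_triangle_add_triangle hF_meas]
  simp_rw [h_inner]
  rw [lintegral_const_mul' _ _ ENNReal.ofReal_ne_top, lintegral_mul_const _ (by fun_prop)]

lemma ellipticKMoment_one : ellipticKMoment 1 =
    ofReal (√2 * (Real.Gamma (1/8) * Real.Gamma (3/8)) ^ 2 / (64 * π)) := by
  rw [ellipticKMoment_one_eq_mul,
    setLIntegral_pow_div_sqrt_one_sub_pow 2 (α := 3/8) (by norm_num) (by norm_num),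
    setLIntegral_pow_div_sqrt_one_sub_pow 0 (α := 1/8) (by norm_num) (by norm_num)]
  have : 0 < Real.Gamma (1/8) := Real.Gamma_pos_of_pos (by norm_num)
  have : 0 < Real.Gamma (3/8) := Real.Gamma_pos_of_pos (by norm_num)
  have : 0 < Real.Gamma (5/8) := Real.Gamma_pos_of_pos (by norm_num)
  have : 0 < Real.Gamma (7/8) := Real.Gamma_pos_of_pos (by norm_num)
  rw [show (3:ℝ)/8 + 1/2 = 7/8 by norm_num, show (1:ℝ)/8 + 1/2 = 5/8 by norm_num,
    ← ENNReal.ofReal_mul (by positivity), ← ENNReal.ofReal_mul (by norm_num)]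
  congr 1
  push_cast
  field_simp
  rw [Real.sq_sqrt pi_pos.le]
  linear_combination -64 * sqrt_two_mul_Gamma_mul_Gamma

lemma agmMoment_neg_one_eq_ellipticKMoment :
    agmMoment (-1) = ofReal 4 * ellipticKMoment (-1) := by
  rw [agmMoment, ellipticKMoment, ← lintegral_const_mul' _ _ ENNReal.ofReal_ne_top,
    setLIntegral_eq_of_bijOn (φ' := fun σ => -(8 * σ * (1 - σ ^ 2) / (1 + σ ^ 2) ^ 3))
      measurableSet_Ioo (((bijOn_pow_Ioo two_ne_zero).comp bijOn_one_sub_div_one_add).comp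
        (bijOn_pow_Ioo two_ne_zero))]
  · refine setLIntegral_congr_fun measurableSet_Ioo fun σ hσ => ?_
    have hσ0 := hσ.1
    have hσ2 : 0 < 1 - σ ^ 2 := sub_pos.2 (pow_lt_one₀ hσ.1.le hσ.2 two_ne_zero)
    have hσ4 : σ ^ 4 < 1 := pow_lt_one₀ hσ.1.le hσ.2 four_ne_zero
    have h_gauss : ofReal (ellipticK (σ ^ 4)) =
        ofReal (1 / (1 + σ ^ 2) ^ 2) * agmIntegral 1 (((1 - σ ^ 2) / (1 + σ ^ 2)) ^ 2) := by
      rw [← agmIntegral_one_add_one_sub ⟨by linarith [pow_pos hσ0 4], hσ4⟩,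
        ← agmIntegral_mul_mul (by positivity), mul_one,
        show (1 + σ ^ 2) ^ 2 * ((1 - σ ^ 2) / (1 + σ ^ 2)) ^ 2 = (1 - σ ^ 2) ^ 2 by field_simp,
        ← agmIntegral_sqrt_mul_add_div_two (a := (1 + σ ^ 2) ^ 2) (by positivity) (by positivity),
        agmIntegral_comm, ← mul_pow, Real.sqrt_sq (by positivity)]
      congr 1 <;> ring
    simp only [Function.comp_apply]
    rw [h_gauss, ← mul_assoc, ← mul_assoc, ← mul_assoc, ← ENNReal.ofReal_mul (by positivity),
      ← ENNReal.ofReal_mul (by linarith), ← ENNReal.ofReal_mul (by linarith), abs_neg,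
      abs_of_pos (by positivity), show 1 + -1 * ((1 - σ ^ 2) / (1 + σ ^ 2)) ^ 2 =
        (2 * σ / (1 + σ ^ 2)) ^ 2 by field_simp; ring, Real.sqrt_sq (by positivity)]
    congr 2
    field_simp
    ring
  · intro σ _
    have h_ne : 1 + σ ^ 2 ≠ 0 := by positivity
    refine ((((hasDerivAt_pow 2 σ).const_sub 1).fun_div ((hasDerivAt_pow 2 σ).const_add 1)
      h_ne).fun_pow 2).congr_deriv ?_
    field_simp
    push_cast
    field_simp
    ring

lemma agmIntegral_landen {t : ℝ} (ht : 0 < t) :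
    agmIntegral 1 (2 * t / (1 + t ^ 2)) = ofReal ((1 + t ^ 2) / 2) * agmIntegral 1 (t ^ 2) := by
  have h_scale : agmIntegral 1 (2 * t / (1 + t ^ 2)) =
      agmIntegral (2 / (1 + t ^ 2) * ((1 + t ^ 2) / 2)) (2 / (1 + t ^ 2) * t) := by
    congr 1 <;> field_simp
  rw [h_scale, agmIntegral_mul_mul (by positivity), one_div_div,
    ← agmIntegral_sqrt_mul_add_div_two one_pos (by positivity), one_mul, Real.sqrt_sq ht.le,
    agmIntegral_comm t]

lemma bijOn_two_mul_div_one_add_sq :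
    BijOn (fun t : ℝ => 2 * t / (1 + t ^ 2)) (Ioo 0 1) (Ioo 0 1) := by
  refine InvOn.bijOn (f' := fun h => (1 - √(1 - h ^ 2)) / h) ⟨fun t ht => ?_, fun h hh => ?_⟩
    (fun t ht => ?_) fun h hh => ?_
  · have ht0 := ht.1
    have ht2 : 0 < 1 - t ^ 2 := by nlinarith [ht.2]
    beta_reduce
    rw [show 1 - (2 * t / (1 + t ^ 2)) ^ 2 = ((1 - t ^ 2) / (1 + t ^ 2)) ^ 2 by field_simp; ring,
      Real.sqrt_sq (by positivity)]
    field_simp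
    ring
  · have hh0 := hh.1
    have h_lt : √(1 - h ^ 2) < 1 := by
      rw [Real.sqrt_lt' one_pos]
      nlinarith
    have h_sq := Real.sq_sqrt (show 0 ≤ 1 - h ^ 2 by nlinarith [hh.2])
    beta_reduce
    set r := √(1 - h ^ 2)
    have h_ne : 1 - r ≠ 0 := (sub_pos.2 h_lt).ne'
    rw [show 1 + ((1 - r) / h) ^ 2 = 2 * (1 - r) / h ^ 2 by field_simp; linear_combination h_sq]
    field_simp
  · have ht0 := ht.1
    exact ⟨by positivity, by rw [div_lt_one (by positivity)]; nlinarith [ht.2]⟩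
  · have h_lt : √(1 - h ^ 2) < 1 := by
      rw [Real.sqrt_lt' one_pos]
      nlinarith [hh.1]
    have h_gt : 1 - h < √(1 - h ^ 2) := Real.lt_sqrt_of_sq_lt (by nlinarith [hh.1, hh.2])
    exact ⟨div_pos (by linarith) hh.1, by rw [div_lt_one hh.1]; linarith⟩

lemma agmMoment_eq_setLIntegral_landen {c : ℝ} (hc : c ^ 2 = 1) : agmMoment c =
    ∫⁻ t in Ioo 0 1, ofReal ((1 - c * t) / √(1 + t ^ 2)) * agmIntegral 1 (t ^ 2) := by
  rw [agmMoment, setLIntegral_eq_of_bijOn (φ' := fun t => 2 * (1 - t ^ 2) / (1 + t ^ 2) ^ 2)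
    measurableSet_Ioo bijOn_two_mul_div_one_add_sq]
  · refine setLIntegral_congr_fun measurableSet_Ioo fun t ht => ?_
    have ht0 := ht.1
    have ht2 : 0 < 1 - t ^ 2 := by nlinarith [ht.2]
    have hct : 0 < 1 + c * t := by nlinarith [ht.2, sq_nonneg (c + t)]
    have h_sq := Real.sq_sqrt (show 0 ≤ 1 + t ^ 2 by positivity)
    rw [agmIntegral_landen ht0, ← mul_assoc, ← mul_assoc, ← ENNReal.ofReal_mul (by positivity),
      ← ENNReal.ofReal_mul (by positivity), abs_of_pos (by positivity),
      show 1 + c * (2 * t / (1 + t ^ 2)) = (1 + c * t) ^ 2 / (1 + t ^ 2) by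
        field_simp; linear_combination -t ^ 2 * hc,
      Real.sqrt_div (by positivity), Real.sqrt_sq hct.le]
    congr 2
    have h_ne := hct.ne'
    rw [show 1 - t ^ 2 = (1 - c * t) * (1 + c * t) by linear_combination t ^ 2 * hc]
    field_simp
    linear_combination (1 - c * t) * h_sq
  · intro t _
    have h_ne : 1 + t ^ 2 ≠ 0 := by positivity
    refine (((hasDerivAt_id t).const_mul 2).fun_div ((hasDerivAt_pow 2 t).const_add 1)
      h_ne).congr_deriv ?_
    simp only [id]
    field_simp
    push_cast
    ring

lemma agmMoment_eq_setLIntegral_sq (c : ℝ) : agmMoment c =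
    ∫⁻ t in Ioo 0 1, ofReal (2 * t / √(1 + c * t ^ 2)) * agmIntegral 1 (t ^ 2) := by
  rw [agmMoment, setLIntegral_eq_of_bijOn measurableSet_Ioo (bijOn_pow_Ioo two_ne_zero)
    fun t _ => hasDerivAt_pow 2 t]
  refine setLIntegral_congr_fun measurableSet_Ioo fun t ht => ?_
  have ht0 := ht.1
  rw [← mul_assoc, ← ENNReal.ofReal_mul (by positivity), abs_of_pos (by positivity)]
  norm_num [div_eq_mul_inv]

lemma agmMoment_neg_one_eq_two_mul : agmMoment (-1) = 2 * agmMoment 1 := by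
  rw [two_mul, agmMoment_eq_setLIntegral_landen (c := -1) (by norm_num)]
  nth_rw 1 [agmMoment_eq_setLIntegral_landen (one_pow 2)]
  rw [agmMoment_eq_setLIntegral_sq 1,
    ← lintegral_add_right _ (by fun_prop)]
  refine setLIntegral_congr_fun measurableSet_Ioo fun t ht => ?_
  have ht0 := ht.1
  rw [← add_mul, ← ENNReal.ofReal_add (div_nonneg (by linarith [ht.2]) (by positivity))
    (by positivity), one_mul, one_mul, ← add_div]
  ring_nf

lemma agmMoment_eq_setLIntegral_setLIntegral (c : ℝ) :
    agmMoment c = ∫⁻ x in Ioo 0 1, ofReal (1 / √(1 - x ^ 2)) *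
      ∫⁻ y in Ioo 0 1, ofReal (1 / √(1 - y ^ 2) / √(1 + c * (x * y))) := by
  have h_triangle : ∀ h ∈ Ioo (0:ℝ) 1, ofReal (1 / √(1 + c * h)) * agmIntegral 1 h =
      ∫⁻ x in Ioo h 1, ofReal (1 / √(1 + c * h) * (1 / √((1 - x ^ 2) * (x ^ 2 - h ^ 2)))) := by
    intro h hh
    rw [agmIntegral_one_eq_setLIntegral hh.1 hh.2, setLIntegral_ofReal_const_mul (by positivity)]
  rw [agmMoment, setLIntegral_congr_fun measurableSet_Ioo h_triangle,
    ← setLIntegral_Ioo_triangle_swap (f := fun x h =>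
      ofReal (1 / √(1 + c * h) * (1 / √((1 - x ^ 2) * (x ^ 2 - h ^ 2)))))
      (by unfold Function.uncurry; fun_prop)]
  refine setLIntegral_congr_fun measurableSet_Ioo fun x hx => ?_
  have hx0 := hx.1
  have hx2 : 0 ≤ 1 - x ^ 2 := by nlinarith [hx.2]
  rw [setLIntegral_Ioo_eq_mul_left hx0, ← setLIntegral_ofReal_const_mul hx0.le,
    ← setLIntegral_ofReal_const_mul (by positivity)]
  congr with y
  rw [show (1 - x ^ 2) * (x ^ 2 - (x * y) ^ 2) = x ^ 2 * ((1 - x ^ 2) * (1 - y ^ 2)) by ring,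
    Real.sqrt_mul (by positivity), Real.sqrt_sq hx0.le, Real.sqrt_mul hx2]
  field_simp

lemma setLIntegral_Ioo_neg_one_zero_eq_comp_neg (g : ℝ → ℝ≥0∞) :
    ∫⁻ y in Ioo (-1) 0, g y = ∫⁻ y in Ioo 0 1, g (-y) := by
  simpa using ((Measure.measurePreserving_neg (volume : Measure ℝ)).setLIntegral_comp_preimage_emb
    (MeasurableEquiv.neg ℝ).measurableEmbedding g (Ioo (-1) 0)).symm

lemma setLIntegral_one_div_sqrt_mul_sqrt {x : ℝ} (hx : x ∈ Ioo (-1) 1) :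
    ∫⁻ y in Ioo (-1) 1, ofReal (1 / √(1 - y ^ 2) / √(1 + (-1) * (x * y))) =
      ofReal 2 * agmIntegral (√(1 + x)) (√(1 - x)) := by
  have hx1 : 0 < 1 + x := by linarith [hx.1]
  have hx2 : 0 < 1 - x := by linarith [hx.2]
  rw [agmIntegral_comm, agmIntegral_eq_setLIntegral_trig _ (Real.sqrt_pos.2 hx1),
    ← setLIntegral_ofReal_const_mul zero_le_two]
  refine setLIntegral_ofReal_eq_of_bijOn (φ' := fun θ => -sin (2 * θ) * 2) measurableSet_Ioo
    bijOn_cos_two_mul (fun θ _ => ?_) fun θ hθ => ?_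
  · simpa using ((hasDerivAt_id θ).const_mul 2).cos
  · have h_sin : 0 < sin (2 * θ) :=
      sin_pos_of_pos_of_lt_pi (by linarith [hθ.1]) (by linarith [hθ.2])
    rw [abs_of_neg (by linarith), ← sin_sq, Real.sqrt_sq h_sin.le, Real.sq_sqrt hx1.le,
      Real.sq_sqrt hx2.le, show 1 + -1 * (x * cos (2 * θ)) =
        (1 - x) * cos θ ^ 2 + (1 + x) * sin θ ^ 2 by rw [cos_two_mul, sin_sq]; ring]
    field_simp

lemma agmMoment_neg_one_add_agmMoment_one :
    agmMoment (-1) + agmMoment 1 = ofReal 2 * chebyshevAgmIntegral := by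
  have h_meas : Measurable fun x : ℝ => ofReal (1 / √(1 - x ^ 2)) *
      ∫⁻ y in Ioo 0 1, ofReal (1 / √(1 - y ^ 2) / √(1 + (-1) * (x * y))) := by
    refine Measurable.mul (by fun_prop) (Measurable.lintegral_prod_right
      (f := fun x y : ℝ => ofReal (1 / √(1 - y ^ 2) / √(1 + (-1) * (x * y)))) ?_)
    unfold Function.uncurry
    fun_prop
  rw [agmMoment_eq_setLIntegral_setLIntegral, agmMoment_eq_setLIntegral_setLIntegral,
    ← lintegral_add_left h_meas, chebyshevAgmIntegral,
    ← lintegral_const_mul' _ _ ENNReal.ofReal_ne_top]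
  refine setLIntegral_congr_fun measurableSet_Ioo fun x hx => ?_
  have h_reflect : ∫⁻ y in Ioo 0 1, ofReal (1 / √(1 - y ^ 2) / √(1 + 1 * (x * y))) =
      ∫⁻ y in Ioo (-1) 0, ofReal (1 / √(1 - y ^ 2) / √(1 + (-1) * (x * y))) := by
    simp [setLIntegral_Ioo_neg_one_zero_eq_comp_neg]
  rw [← mul_add, add_comm, h_reflect,
    ← setLIntegral_Ioo_eq_add (show (0:ℝ) ∈ Ioo (-1) 1 by norm_num),
    setLIntegral_one_div_sqrt_mul_sqrt ⟨by linarith [hx.1], hx.2⟩]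
  ring

lemma ellipticKMoment_one_eq_setLIntegral_setLIntegral :
    ofReal 4 * ellipticKMoment 1 = ∫⁻ σ in Ioo 0 1, ∫⁻ θ in Ioo 0 (π / 2),
      ofReal (4 * (1 + σ ^ 2) / legendreRadius (σ ^ 4) (2 * sin θ ^ 2 - 1)) := by
  rw [ellipticKMoment, ← lintegral_const_mul' _ _ ENNReal.ofReal_ne_top]
  refine setLIntegral_congr_fun measurableSet_Ioo fun σ hσ => ?_
  have hσ4 : σ ^ 4 < 1 := pow_lt_one₀ hσ.1.le hσ.2 four_ne_zero
  rw [← agmIntegral_one_add_one_sub ⟨by linarith [pow_pos hσ.1 4], hσ4⟩,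
    agmIntegral_eq_setLIntegral_trig _ (by linarith), ← mul_assoc,
    ← ENNReal.ofReal_mul (by norm_num), ← setLIntegral_ofReal_const_mul (by positivity)]
  congr with θ
  rw [mul_one_div, one_mul, legendreRadius, cos_sq']
  ring_nf

lemma ellipticKMoment_one_eq_chebyshevAgmIntegral :
    ofReal 4 * ellipticKMoment 1 = ofReal (2 * √2) * chebyshevAgmIntegral := by
  have h_quarter : ∀ x ∈ Ioo (0:ℝ) 1,
      ofReal (2 * √2) * (ofReal (1 / √(1 - x ^ 2)) * agmIntegral (√(1 + x)) (√(1 - x))) =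
        ofReal (1 / √(1 - x ^ 2)) * ofReal (legendreQuarter (2 * x ^ 2 - 1)) := fun x hx => by
    rw [ofReal_legendreQuarter_two_mul_sq_sub_one (Ioo_subset_Ico_self hx), mul_left_comm]
  rw [ellipticKMoment_one_eq_setLIntegral_setLIntegral, setLIntegral_setLIntegral_swap
      (by unfold Function.uncurry; fun_prop), chebyshevAgmIntegral,
    ← lintegral_const_mul' _ _ ENNReal.ofReal_ne_top,
    setLIntegral_congr_fun measurableSet_Ioo h_quarter,
    setLIntegral_eq_of_bijOn measurableSet_Ioo bijOn_sin_Ioo fun θ _ => hasDerivAt_sin θ]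
  refine setLIntegral_congr_fun measurableSet_Ioo fun θ hθ => ?_
  have h_cos : 0 < cos θ := cos_pos_of_mem_Ioo ⟨by linarith [hθ.1, pi_pos], hθ.2⟩
  have h_lt : 2 * sin θ ^ 2 - 1 < 1 := by nlinarith [sin_sq_add_cos_sq θ]
  rw [← ofReal_legendreQuarter h_lt, ← cos_sq', Real.sqrt_sq h_cos.le, abs_of_pos h_cos,
    ← mul_assoc, ← ENNReal.ofReal_mul h_cos.le, mul_one_div_cancel h_cos.ne', ENNReal.ofReal_one,
    one_mul]

lemma ellipticKMoment_neg_one : ellipticKMoment (-1) =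
    ofReal ((Real.Gamma (1/8) * Real.Gamma (3/8)) ^ 2 / (96 * π)) := by
  have h_two := Real.sq_sqrt zero_le_two
  have h_ratio : ofReal 12 * ellipticKMoment (-1) = ofReal (4 * √2) * ellipticKMoment 1 := by
    calc ofReal 12 * ellipticKMoment (-1) = ofReal 3 * agmMoment (-1) := by
          rw [agmMoment_neg_one_eq_ellipticKMoment, ← mul_assoc,
            ← ENNReal.ofReal_mul (by norm_num)]
          norm_num
      _ = ofReal 2 * (agmMoment (-1) + agmMoment 1) := by
          rw [agmMoment_neg_one_eq_two_mul]
          norm_num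
          ring
      _ = ofReal √2 * (ofReal (2 * √2) * chebyshevAgmIntegral) := by
          rw [agmMoment_neg_one_add_agmMoment_one, ← mul_assoc, ← mul_assoc,
            ← ENNReal.ofReal_mul (by norm_num), ← ENNReal.ofReal_mul (by positivity)]
          congr 2
          linarith
      _ = ofReal (4 * √2) * ellipticKMoment 1 := by
          rw [← ellipticKMoment_one_eq_chebyshevAgmIntegral, ← mul_assoc,
            ← ENNReal.ofReal_mul (by positivity), mul_comm √2]
  calc ellipticKMoment (-1) = ofReal (1 / 12) * (ofReal 12 * ellipticKMoment (-1)) := by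
        rw [← mul_assoc, ← ENNReal.ofReal_mul (by norm_num)]
        norm_num
    _ = _ := by
        rw [h_ratio, ellipticKMoment_one, ← ENNReal.ofReal_mul (by positivity),
          ← ENNReal.ofReal_mul (by positivity)]
        congr 1
        field_simp
        rw [h_two]
        ring

end Moments

section LegendreEquation

variable {x : ℝ}

lemma hasDerivAt_div_legendreRadius_pow_right {c : ℝ → ℝ} {r c' : ℝ} (hc : HasDerivAt c c' x)
    (h : 0 < 1 - 2 * r * x + r ^ 2) (n : ℕ) :
    HasDerivAt (fun x => c x / legendreRadius r x ^ n)
      (c' / legendreRadius r x ^ n + n * r * c x / legendreRadius r x ^ (n + 2)) x := by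
  have h_arg : HasDerivAt (fun x => 1 - 2 * r * x + r ^ 2) (-(2 * r)) x := by
    simpa using (((hasDerivAt_id x).const_mul (2 * r)).const_sub 1).add_const (r ^ 2)
  refine (hasDerivAt_div_sqrt_pow hc h_arg h n).congr_deriv ?_
  rw [legendreRadius]
  ring

lemma legendreRadius_pow_four_pos (hx : x < 1) (σ : ℝ) : 0 < legendreRadius (σ ^ 4) x :=
  legendreRadius_pos (legendreRadius_arg_pos (by positivity) hx)

/-- The integral `∫₀¹ (1 + σ²) σ⁴ⁿ / R(σ⁴, x)²ⁿ⁺¹ dσ`, which is up to a constant the `n`-th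
derivative of `legendreQuarter`. -/
noncomputable def legendreMoment (n : ℕ) (x : ℝ) : ℝ :=
  ∫ σ in (0:ℝ)..1, (1 + σ ^ 2) * σ ^ (4 * n) / legendreRadius (σ ^ 4) x ^ (2 * n + 1)

lemma continuous_legendreMoment_integrand (n : ℕ) (hx : x < 1) : Continuous fun σ : ℝ =>
    (1 + σ ^ 2) * σ ^ (4 * n) / legendreRadius (σ ^ 4) x ^ (2 * n + 1) :=
  Continuous.div (by fun_prop) (by fun_prop) fun σ =>
    pow_ne_zero _ (legendreRadius_pow_four_pos hx σ).ne'

lemma continuousOn_legendreMoment_integrand (n : ℕ) :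
    ContinuousOn (Function.uncurry fun x σ : ℝ =>
      (1 + σ ^ 2) * σ ^ (4 * n) / legendreRadius (σ ^ 4) x ^ (2 * n + 1)) (Iio 1 ×ˢ Icc 0 1) := by
  refine ContinuousOn.div (by fun_prop) (by fun_prop) ?_
  rintro ⟨x, σ⟩ ⟨hx, _⟩
  exact pow_ne_zero _ (legendreRadius_pow_four_pos hx σ).ne'

lemma legendreMoment_nonneg (n : ℕ) (x : ℝ) : 0 ≤ legendreMoment n x :=
  intervalIntegral.integral_nonneg zero_le_one fun σ _ => by
    have : 0 ≤ legendreRadius (σ ^ 4) x := Real.sqrt_nonneg _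
    have : 0 ≤ σ ^ (4 * n) := by rw [pow_mul]; positivity
    positivity

lemma legendreQuarter_eq_four_mul (x : ℝ) : legendreQuarter x = 4 * legendreMoment 0 x := by
  rw [legendreQuarter, legendreMoment, ← intervalIntegral.integral_const_mul]
  simp [mul_div_assoc]

lemma hasDerivAt_legendreMoment (n : ℕ) (hx : x < 1) :
    HasDerivAt (legendreMoment n) ((2 * n + 1) * legendreMoment (n + 1) x) x := by
  simp only [legendreMoment, ← intervalIntegral.integral_const_mul]
  refine hasDerivAt_intervalIntegral (F' := fun x σ => (2 * n + 1) *
    ((1 + σ ^ 2) * σ ^ (4 * (n + 1)) / legendreRadius (σ ^ 4) x ^ (2 * (n + 1) + 1)))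
    zero_le_one (Iio_mem_nhds hx)
    (fun x hx => (continuous_legendreMoment_integrand n hx).continuousOn)
    (continuousOn_const.mul (continuousOn_legendreMoment_integrand (n + 1))) fun x hx σ _ => ?_
  refine (hasDerivAt_div_legendreRadius_pow_right (hasDerivAt_const x ((1 + σ ^ 2) * σ ^ (4 * n)))
    (legendreRadius_arg_pos (by positivity) hx) (2 * n + 1)).congr_deriv ?_
  push_cast
  ring

lemma hasDerivAt_legendreRadius_pow_four_arg (σ x : ℝ) :
    HasDerivAt (fun σ => 1 - 2 * σ ^ 4 * x + (σ ^ 4) ^ 2) (8 * σ ^ 7 - 8 * σ ^ 3 * x) σ :=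
  (((((hasDerivAt_pow 4 σ).const_mul 2).mul_const x).const_sub 1).fun_add
    ((hasDerivAt_pow 4 σ).fun_pow 2)).congr_deriv (by norm_num; ring)

lemma hasDerivAt_legendreRadius_antideriv (hx : x < 1) (σ : ℝ) :
    HasDerivAt (fun σ => (σ + σ ^ 3) * (2 * σ ^ 8 - 2 * σ ^ 4 * x) / legendreRadius (σ ^ 4) x ^ 3 -
        (3 * σ + σ ^ 3) / 2 / legendreRadius (σ ^ 4) x ^ 1)
      (24 * (1 - x ^ 2) * ((1 + σ ^ 2) * σ ^ 8 / legendreRadius (σ ^ 4) x ^ 5) -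
        16 * x * ((1 + σ ^ 2) * σ ^ 4 / legendreRadius (σ ^ 4) x ^ 3) -
        3 / 2 * ((1 + σ ^ 2) / legendreRadius (σ ^ 4) x)) σ := by
  have h_pos := legendreRadius_arg_pos (show 0 ≤ σ ^ 4 by positivity) hx
  have h_arg := hasDerivAt_legendreRadius_pow_four_arg σ x
  have h_num : HasDerivAt (fun σ => (3 * σ + σ ^ 3) / 2) ((3 + 3 * σ ^ 2) / 2) σ :=
    ((((hasDerivAt_id σ).const_mul 3).fun_add (hasDerivAt_pow 3 σ)).div_const 2).congr_deriv
      (by norm_num)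
  have h_num' : HasDerivAt (fun σ => (σ + σ ^ 3) * (2 * σ ^ 8 - 2 * σ ^ 4 * x))
      ((1 + 3 * σ ^ 2) * (2 * σ ^ 8 - 2 * σ ^ 4 * x) +
        (σ + σ ^ 3) * (16 * σ ^ 7 - 8 * σ ^ 3 * x)) σ :=
    (((hasDerivAt_id σ).fun_add (hasDerivAt_pow 3 σ)).fun_mul
      (((hasDerivAt_pow 8 σ).const_mul 2).fun_sub
        (((hasDerivAt_pow 4 σ).const_mul 2).mul_const x))).congr_deriv
          (by simp only [id_eq]; norm_num only; ring)
  refine ((hasDerivAt_div_sqrt_pow h_num' h_arg h_pos 3).fun_sub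
    (hasDerivAt_div_sqrt_pow h_num h_arg h_pos 1)).congr_deriv ?_
  have h_ne := (legendreRadius_pos h_pos).ne'
  have h_sq := legendreRadius_sq h_pos
  rw [legendreRadius] at *
  set R := √(1 - 2 * σ ^ 4 * x + (σ ^ 4) ^ 2)
  have h_four : R ^ 4 = (1 - 2 * σ ^ 4 * x + (σ ^ 4) ^ 2) ^ 2 := by rw [← h_sq]; ring
  push_cast
  field_simp
  simp only [h_sq, h_four]
  ring

lemma legendreMoment_ode (hx : x < 1) :
    24 * (1 - x ^ 2) * legendreMoment 2 x - 16 * x * legendreMoment 1 x =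
      3 / 2 * legendreMoment 0 x := by
  have h_int (n : ℕ) : IntervalIntegrable (fun σ : ℝ => (1 + σ ^ 2) * σ ^ (4 * n) /
      legendreRadius (σ ^ 4) x ^ (2 * n + 1)) volume 0 1 :=
    (continuous_legendreMoment_integrand n hx).intervalIntegrable _ _
  rw [← sub_eq_zero]
  simp only [legendreMoment, ← intervalIntegral.integral_const_mul]
  rw [← intervalIntegral.integral_sub ((h_int 2).const_mul _) ((h_int 1).const_mul _),
    ← intervalIntegral.integral_sub (((h_int 2).const_mul _).sub ((h_int 1).const_mul _))
      ((h_int 0).const_mul _),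
    intervalIntegral.integral_eq_sub_of_hasDerivAt
      (fun σ _ => by simpa using hasDerivAt_legendreRadius_antideriv hx σ)
      ((((h_int 2).const_mul _).sub ((h_int 1).const_mul _)).sub ((h_int 0).const_mul _))]
  have h_pos := legendreRadius_pow_four_pos hx 1
  have h_sq := legendreRadius_sq (legendreRadius_arg_pos (r := 1 ^ 4) (by norm_num) hx)
  have h_ne := h_pos.ne'
  norm_num at h_sq h_ne ⊢
  field_simp
  rw [h_sq]
  ring

/-- The quantity `(1 - x²) q'(x)` for `q = legendreQuarter`. -/
noncomputable def legendreFlux (x : ℝ) : ℝ := 4 * (1 - x ^ 2) * legendreMoment 1 x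

lemma hasDerivAt_legendreQuarter (hx : x ∈ Ioo (-1) 1) :
    HasDerivAt legendreQuarter (legendreFlux x / (1 - x ^ 2)) x := by
  rw [funext legendreQuarter_eq_four_mul]
  refine ((hasDerivAt_legendreMoment 0 hx.2).const_mul 4).congr_deriv ?_
  have h_ne : 1 - x ^ 2 ≠ 0 := by nlinarith [hx.1, hx.2]
  rw [legendreFlux]
  field_simp
  norm_num

lemma hasDerivAt_legendreFlux (hx : x < 1) :
    HasDerivAt legendreFlux (3 / 16 * legendreQuarter x) x := by
  unfold legendreFlux
  refine ((((hasDerivAt_pow 2 x).const_sub 1).const_mul 4).fun_mul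
    (hasDerivAt_legendreMoment 1 hx)).congr_deriv ?_
  rw [legendreQuarter_eq_four_mul]
  push_cast
  linear_combination 1 / 2 * legendreMoment_ode hx

end LegendreEquation

section LegendreEndpoints

variable {r x : ℝ}

lemma legendreQuarter_neg_one : legendreQuarter (-1) = √2 * π := by
  have h := ofReal_legendreQuarter_two_mul_sq_sub_one (z := 0) (by norm_num)
  rw [show (2 * 0 ^ 2 - 1 : ℝ) = -1 by norm_num, add_zero, sub_zero, Real.sqrt_one,
    agmIntegral_self one_pos, ← ENNReal.ofReal_mul (by positivity),
    ENNReal.ofReal_eq_ofReal_iff (legendreQuarter_nonneg _) (by positivity)] at h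
  rw [h]
  ring

lemma sqrt_one_sub_mul_legendreQuarter_le (hx : x ∈ Ico (-1) 1) :
    √(1 - x) * legendreQuarter x ≤ 2 * π * √√((1 - x) / 2) := by
  obtain ⟨hx0, hx1⟩ := hx
  have hz : √((1 + x) / 2) ^ 2 = (1 + x) / 2 := Real.sq_sqrt (by linarith)
  have hz1 : √((1 + x) / 2) < 1 := by rw [Real.sqrt_lt' one_pos]; linarith
  set z := √((1 + x) / 2)
  have hz0 : 0 ≤ z := Real.sqrt_nonneg _
  set s := √√((1 - x) / 2)
  have hs : 0 < s := by have : 0 < (1 - x) / 2 := by linarith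
                        positivity
  have hs_sq : √(1 + z) * √(1 - z) = s ^ 2 := by
    rw [← Real.sqrt_mul (by linarith), Real.sq_sqrt (Real.sqrt_nonneg _)]
    congr 1
    linear_combination -hz
  have h_le : legendreQuarter x ≤ √2 * π / s := by
    have h := ofReal_legendreQuarter_two_mul_sq_sub_one ⟨hz0, hz1⟩
    rw [hz, show 2 * ((1 + x) / 2) - 1 = x by ring] at h
    rw [← ENNReal.ofReal_le_ofReal_iff (by positivity), h]
    refine (mul_le_mul_right (agmIntegral_le (Real.sqrt_pos.2 (by linarith))
      (Real.sqrt_pos.2 (by linarith))) _).trans_eq ?_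
    rw [hs_sq, Real.sqrt_sq hs.le, ← ENNReal.ofReal_mul (by positivity)]
    congr 1
    field_simp
  have h_sqrt : √(1 - x) = √2 * s ^ 2 := by
    rw [Real.sq_sqrt (Real.sqrt_nonneg _), ← Real.sqrt_mul zero_le_two]
    congr 1
    ring
  calc √(1 - x) * legendreQuarter x ≤ √2 * s ^ 2 * (√2 * π / s) := by rw [h_sqrt]; gcongr
    _ = √2 ^ 2 * π * s := by field_simp
    _ = 2 * π * s := by rw [Real.sq_sqrt zero_le_two]

lemma tendsto_sqrt_one_sub_sq_mul_legendreQuarter :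
    Tendsto (fun x => √(1 - x ^ 2) * legendreQuarter x) (𝓝[<] 1) (𝓝 0) := by
  have h_bound : Tendsto (fun x => √(1 + x) * (2 * π * √√((1 - x) / 2))) (𝓝[<] 1) (𝓝 0) := by
    have h_cont : Continuous fun x => √(1 + x) * (2 * π * √√((1 - x) / 2)) := by fun_prop
    simpa using (h_cont.tendsto 1).mono_left nhdsWithin_le_nhds
  refine squeeze_zero' (Eventually.of_forall fun x => ?_) ?_ h_bound
  · exact mul_nonneg (Real.sqrt_nonneg _) (legendreQuarter_nonneg x)
  · filter_upwards [Ioo_mem_nhdsLT (show (-1:ℝ) < 1 by norm_num)] with x hx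
    rw [show 1 - x ^ 2 = (1 + x) * (1 - x) by ring, Real.sqrt_mul (by linarith [hx.1]), mul_assoc]
    exact mul_le_mul_of_nonneg_left
      (sqrt_one_sub_mul_legendreQuarter_le (Ioo_subset_Ico_self hx)) (Real.sqrt_nonneg _)

lemma setLIntegral_one_div_legendreRadius (hr : r ∈ Ioo 0 1) :
    ∫⁻ x in Ioo (-1) 1, ofReal (1 / legendreRadius r x) = 2 := by
  have h_cont : Continuous fun x => -(legendreRadius r x / r) := by fun_prop
  have h_ends {x : ℝ} : Tendsto (fun x => -(legendreRadius r x / r)) (𝓝 x)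
    (𝓝 (-(legendreRadius r x / r))) := h_cont.tendsto x
  rw [setLIntegral_ofReal_eq_sub_of_hasDerivAt_of_tendsto (by norm_num)
    (f := fun x => -(legendreRadius r x / r)) (fun x hx => ?_)
    (fun x _ => by unfold legendreRadius; positivity)
    (h_ends.mono_left nhdsWithin_le_nhds) (h_ends.mono_left nhdsWithin_le_nhds)]
  · rw [legendreRadius, legendreRadius, show 1 - 2 * r * 1 + r ^ 2 = (1 - r) ^ 2 by ring,
      show 1 - 2 * r * -1 + r ^ 2 = (1 + r) ^ 2 by ring, Real.sqrt_sq (by linarith [hr.2]),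
      Real.sqrt_sq (by linarith [hr.1])]
    have hr0 := hr.1.ne'
    rw [show -((1 - r) / r) - -((1 + r) / r) = 2 by field_simp; ring, ENNReal.ofReal_ofNat]
  · have h_arg : HasDerivAt (fun x => 1 - 2 * r * x + r ^ 2) (-(2 * r)) x := by
      simpa using (((hasDerivAt_id x).const_mul (2 * r)).const_sub 1).add_const (r ^ 2)
    refine ((h_arg.sqrt (legendreRadius_arg_pos hr.1.le hx.2).ne').div_const r).fun_neg.congr_deriv
      ?_
    have hr0 := hr.1.ne'
    rw [legendreRadius]
    field_simp

lemma setLIntegral_legendreQuarter :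
    ∫⁻ x in Ioo (-1) 1, ofReal (legendreQuarter x) = ofReal (32 / 3) := by
  have h_meas : Measurable (Function.uncurry fun x σ =>
      ofReal (4 * (1 + σ ^ 2) / legendreRadius (σ ^ 4) x)) := by
    unfold Function.uncurry
    fun_prop
  have h_inner : ∀ σ ∈ Ioo (0:ℝ) 1,
      ∫⁻ x in Ioo (-1) 1, ofReal (4 * (1 + σ ^ 2) / legendreRadius (σ ^ 4) x) =
        ofReal (8 * (1 + σ ^ 2)) := fun σ hσ => by
    simp_rw [← mul_one_div (4 * (1 + σ ^ 2)) (legendreRadius _ _)]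
    rw [setLIntegral_ofReal_const_mul (by positivity),
      setLIntegral_one_div_legendreRadius ((bijOn_pow_Ioo four_ne_zero).mapsTo hσ),
      ← ENNReal.ofReal_ofNat, ← ENNReal.ofReal_mul (by positivity)]
    congr 1
    ring
  rw [setLIntegral_congr_fun measurableSet_Ioo fun x hx => ofReal_legendreQuarter hx.2,
    setLIntegral_setLIntegral_swap h_meas, setLIntegral_congr_fun measurableSet_Ioo h_inner,
    ← ofReal_intervalIntegral_eq_setLIntegral zero_le_one (by fun_prop) fun _ _ => by positivity]
  congr 1
  simp only [intervalIntegral.integral_const_mul]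
  norm_num

lemma continuousOn_legendreQuarter : ContinuousOn legendreQuarter (Iio 1) := fun x hx => by
  rw [funext legendreQuarter_eq_four_mul]
  exact (hasDerivAt_legendreMoment 0 hx).continuousAt.continuousWithinAt.const_mul 4

lemma intervalIntegrable_legendreQuarter : IntervalIntegrable legendreQuarter volume (-1) 1 := by
  rw [intervalIntegrable_iff_integrableOn_Ioo_of_le (by norm_num)]
  refine ⟨(continuousOn_legendreQuarter.mono Ioo_subset_Iio_self).aestronglyMeasurable
    measurableSet_Ioo, ?_⟩
  rw [hasFiniteIntegral_iff_ofReal (Eventually.of_forall legendreQuarter_nonneg),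
    setLIntegral_legendreQuarter]
  exact ENNReal.ofReal_lt_top

lemma integral_legendreQuarter : ∫ x in (-1:ℝ)..1, legendreQuarter x = 32 / 3 := by
  rw [integral_of_le (by norm_num), integral_Ioc_eq_integral_Ioo,
    integral_eq_lintegral_of_nonneg_ae (Eventually.of_forall legendreQuarter_nonneg)
      ((continuousOn_legendreQuarter.mono Ioo_subset_Iio_self).aestronglyMeasurable
        measurableSet_Ioo), setLIntegral_legendreQuarter, ENNReal.toReal_ofReal (by norm_num)]

lemma legendreFlux_eq_integral (hx : x ∈ Ico (-1) 1) :
    legendreFlux x = 3 / 16 * ∫ y in (-1:ℝ)..x, legendreQuarter y := by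
  rw [← intervalIntegral.integral_const_mul, intervalIntegral.integral_eq_sub_of_hasDerivAt
    (f := legendreFlux) (fun y hy => hasDerivAt_legendreFlux ?_)]
  · simp [legendreFlux]
  · refine (ContinuousOn.intervalIntegrable ?_).const_mul _
    rw [uIcc_of_le hx.1]
    exact continuousOn_legendreQuarter.mono fun y hy => hy.2.trans_lt hx.2
  · rw [uIcc_of_le hx.1] at hy
    exact hy.2.trans_lt hx.2

lemma tendsto_legendreFlux : Tendsto legendreFlux (𝓝[<] 1) (𝓝 2) := by
  have h_cont : ContinuousOn (fun x => ∫ y in (-1:ℝ)..x, legendreQuarter y) (Icc (-1) 1) := by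
    simpa [uIcc_of_le] using intervalIntegral.continuousOn_primitive_interval'
      intervalIntegrable_legendreQuarter left_mem_uIcc
  have h_lim := (tendsto_nhdsLT_of_continuousOn_Icc (by norm_num) h_cont).const_mul (3 / 16)
  rw [integral_legendreQuarter, show (3 / 16 * (32 / 3) : ℝ) = 2 by norm_num] at h_lim
  refine h_lim.congr' ?_
  filter_upwards [Ioo_mem_nhdsLT (show (-1:ℝ) < 1 by norm_num)] with x hx
  exact (legendreFlux_eq_integral (Ioo_subset_Ico_self hx)).symm

lemma tendsto_legendreQuarter_neg :
    Tendsto (fun x => legendreQuarter (-x)) (𝓝[<] 1) (𝓝 (√2 * π)) := by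
  rw [← legendreQuarter_neg_one]
  exact ((continuousOn_legendreQuarter.continuousAt (Iio_mem_nhds (by norm_num))).tendsto.comp
    (continuous_neg.tendsto 1)).mono_left nhdsWithin_le_nhds

lemma tendsto_legendreFlux_neg_div_sqrt :
    Tendsto (fun x => legendreFlux (-x) / √(1 - x ^ 2)) (𝓝[<] 1) (𝓝 0) := by
  have h_moment : ContinuousAt (fun x => legendreMoment 1 (-x)) 1 :=
    (hasDerivAt_legendreMoment 1 (by norm_num)).continuousAt.comp
      (f := fun x : ℝ => -x) (by fun_prop)
  have h_lim : ContinuousAt (fun x => 4 * √(1 - x ^ 2) * legendreMoment 1 (-x)) 1 := by fun_prop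
  have h_lim' := h_lim.tendsto.mono_left (nhdsWithin_le_nhds (s := Iio 1))
  norm_num at h_lim'
  refine h_lim'.congr fun x => ?_
  rw [legendreFlux, neg_sq]
  nth_rewrite 1 [← Real.div_sqrt (x := 1 - x ^ 2)]
  ring

end LegendreEndpoints

section LegendreProduct

/-- The even product `q(x) q(-x)` of the two solutions of Legendre's equation given by
`q = legendreQuarter`. -/
noncomputable def legendreProduct (x : ℝ) : ℝ := legendreQuarter x * legendreQuarter (-x)

/-- The quantity `(1 - x²) u'(x)` for `u = legendreProduct`. -/
noncomputable def legendreProductFlux (x : ℝ) : ℝ :=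
  legendreFlux x * legendreQuarter (-x) - legendreQuarter x * legendreFlux (-x)

/-- The product of the fluxes of the two factors of `legendreProduct`. -/
noncomputable def legendreFluxProduct (x : ℝ) : ℝ := legendreFlux x * legendreFlux (-x)

variable {x : ℝ}

lemma legendreProduct_nonneg (x : ℝ) : 0 ≤ legendreProduct x :=
  mul_nonneg (legendreQuarter_nonneg _) (legendreQuarter_nonneg _)

lemma legendreProduct_neg (x : ℝ) : legendreProduct (-x) = legendreProduct x := by
  rw [legendreProduct, legendreProduct, neg_neg, mul_comm]

lemma legendreProductFlux_neg (x : ℝ) : legendreProductFlux (-x) = -legendreProductFlux x := by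
  rw [legendreProductFlux, legendreProductFlux, neg_neg]
  ring

lemma legendreFluxProduct_neg (x : ℝ) : legendreFluxProduct (-x) = legendreFluxProduct x := by
  rw [legendreFluxProduct, legendreFluxProduct, neg_neg, mul_comm]

lemma neg_mem_Ioo (hx : x ∈ Ioo (-1) 1) : -x ∈ Ioo (-1) 1 :=
  ⟨neg_lt_neg hx.2, neg_lt.1 hx.1⟩

lemma hasDerivAt_legendreQuarter_neg (hx : x ∈ Ioo (-1) 1) :
    HasDerivAt (fun x => legendreQuarter (-x)) (-(legendreFlux (-x) / (1 - x ^ 2))) x := by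
  refine ((hasDerivAt_legendreQuarter (neg_mem_Ioo hx)).comp x (hasDerivAt_neg x)).congr_deriv ?_
  rw [neg_sq, mul_neg_one]

lemma hasDerivAt_legendreFlux_neg (hx : x ∈ Ioo (-1) 1) :
    HasDerivAt (fun x => legendreFlux (-x)) (-(3 / 16 * legendreQuarter (-x))) x := by
  exact ((hasDerivAt_legendreFlux (neg_mem_Ioo hx).2).comp x (hasDerivAt_neg x)).congr_deriv
    (mul_neg_one _)

lemma hasDerivAt_legendreProduct (hx : x ∈ Ioo (-1) 1) :
    HasDerivAt legendreProduct (legendreProductFlux x / (1 - x ^ 2)) x := by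
  refine ((hasDerivAt_legendreQuarter hx).fun_mul
    (hasDerivAt_legendreQuarter_neg hx)).congr_deriv ?_
  rw [legendreProductFlux]
  ring

lemma hasDerivAt_legendreProductFlux (hx : x ∈ Ioo (-1) 1) : HasDerivAt legendreProductFlux
    (3 / 8 * legendreProduct x - 2 * legendreFluxProduct x / (1 - x ^ 2)) x := by
  refine (((hasDerivAt_legendreFlux hx.2).fun_mul (hasDerivAt_legendreQuarter_neg hx)).fun_sub
    ((hasDerivAt_legendreQuarter hx).fun_mul (hasDerivAt_legendreFlux_neg hx))).congr_deriv ?_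
  rw [legendreProduct, legendreFluxProduct]
  ring

lemma hasDerivAt_legendreFluxProduct (hx : x ∈ Ioo (-1) 1) :
    HasDerivAt legendreFluxProduct (-(3 / 16 * legendreProductFlux x)) x := by
  refine ((hasDerivAt_legendreFlux hx.2).fun_mul (hasDerivAt_legendreFlux_neg hx)).congr_deriv ?_
  rw [legendreProductFlux]
  ring

lemma intervalIntegrable_legendreProduct : IntervalIntegrable legendreProduct volume (-1) 1 := by
  have h_mono : MonotoneOn legendreQuarter (Ioo (-1) 1) :=
    monotoneOn_of_hasDerivWithinAt_nonneg (convex_Ioo _ _)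
      (continuousOn_legendreQuarter.mono Ioo_subset_Iio_self)
      (fun x hx => (hasDerivAt_legendreQuarter (interior_subset hx)).hasDerivWithinAt)
      fun x hx => by
        have hx' : 0 ≤ 1 - x ^ 2 := by nlinarith [(interior_subset hx).1, (interior_subset hx).2]
        exact div_nonneg (mul_nonneg (by positivity) (legendreMoment_nonneg 1 x)) hx'
  have h_neg : IntervalIntegrable (fun x => legendreQuarter (-x)) volume (-1) 1 := by
    simpa using intervalIntegrable_legendreQuarter.symm.comp_sub_left 0
  have h_cont : ContinuousOn legendreProduct (Ioo (-1) 1) := fun x hx =>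
    (hasDerivAt_legendreProduct hx).continuousAt.continuousWithinAt
  have h_bound := (intervalIntegrable_legendreQuarter.add h_neg).const_mul (legendreQuarter 0)
  rw [intervalIntegrable_iff_integrableOn_Ioo_of_le (by norm_num)] at h_bound ⊢
  refine h_bound.mono' (h_cont.aestronglyMeasurable measurableSet_Ioo)
    (ae_restrict_of_forall_mem measurableSet_Ioo fun x hx => ?_)
  rw [Real.norm_of_nonneg (legendreProduct_nonneg x), legendreProduct]
  have h_zero : (0:ℝ) ∈ Ioo (-1) 1 := by norm_num
  have hq := legendreQuarter_nonneg x
  have hq_neg := legendreQuarter_nonneg (-x)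
  rcases le_total 0 x with hx0 | hx0
  · nlinarith [h_mono (neg_mem_Ioo hx) h_zero (neg_nonpos.2 hx0), legendreQuarter_nonneg 0]
  · nlinarith [h_mono hx h_zero hx0, legendreQuarter_nonneg 0]

lemma tendsto_sqrt_mul_legendreProduct :
    Tendsto (fun x => √(1 - x ^ 2) * legendreProduct x) (𝓝[<] 1) (𝓝 0) := by
  simpa [legendreProduct, mul_assoc] using
    tendsto_sqrt_one_sub_sq_mul_legendreQuarter.mul tendsto_legendreQuarter_neg

lemma tendsto_legendreProductFlux : Tendsto legendreProductFlux (𝓝[<] 1) (𝓝 (2 * √2 * π)) := by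
  have h_lim := (tendsto_legendreFlux.mul tendsto_legendreQuarter_neg).sub
    (tendsto_sqrt_one_sub_sq_mul_legendreQuarter.mul tendsto_legendreFlux_neg_div_sqrt)
  rw [mul_zero, sub_zero, ← mul_assoc] at h_lim
  refine h_lim.congr' ?_
  filter_upwards [Ioo_mem_nhdsLT (show (-1:ℝ) < 1 by norm_num)] with x hx
  have h_ne : √(1 - x ^ 2) ≠ 0 := (Real.sqrt_pos.2 (by nlinarith [hx.1, hx.2])).ne'
  rw [legendreProductFlux]
  field_simp

lemma tendsto_legendreFluxProduct_div_sqrt :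
    Tendsto (fun x => legendreFluxProduct x / √(1 - x ^ 2)) (𝓝[<] 1) (𝓝 0) := by
  simpa [legendreFluxProduct, mul_div_assoc] using
    tendsto_legendreFlux.mul tendsto_legendreFlux_neg_div_sqrt

end LegendreProduct

section BoundaryForm

/-- The bilinear concomitant of `u = legendreProduct` and a test function `f`, where `f₂` stands for
`(1 - x²) f'` and `h` for the derivative of `f₂`. -/
noncomputable def legendreConcomitant (f f₂ h : ℝ → ℝ) (x : ℝ) : ℝ :=
  legendreProductFlux x * f₂ x - (1 - x ^ 2) * legendreProduct x * h x +
    2 * legendreFluxProduct x * f x + 3 / 8 * ((1 - x ^ 2) * legendreProduct x * f x)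

variable {f f₂ h : ℝ → ℝ} {h' x a b c : ℝ}

-- `u` satisfies a third-order linear equation; this is Lagrange's identity for it.
lemma hasDerivAt_legendreConcomitant (hx : x ∈ Ioo (-1) 1)
    (hf : HasDerivAt f (f₂ x / (1 - x ^ 2)) x) (hf₂ : HasDerivAt f₂ (h x) x)
    (hh : HasDerivAt h h' x) :
    HasDerivAt (legendreConcomitant f f₂ h) (legendreProduct x *
      (2 * x * h x - (1 - x ^ 2) * h' + 3 / 4 * (f₂ x - x * f x))) x := by
  have h_ne : 1 - x ^ 2 ≠ 0 := by nlinarith [hx.1, hx.2]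
  have h_weight : HasDerivAt (fun x => (1 - x ^ 2) * legendreProduct x)
      (-(2 * x) * legendreProduct x + (1 - x ^ 2) * (legendreProductFlux x / (1 - x ^ 2))) x := by
    simpa using ((hasDerivAt_pow 2 x).const_sub 1).fun_mul (hasDerivAt_legendreProduct hx)
  refine (((((hasDerivAt_legendreProductFlux hx).fun_mul hf₂).fun_sub (h_weight.fun_mul hh)).fun_add
    (((hasDerivAt_legendreFluxProduct hx).const_mul 2).fun_mul hf)).fun_add
    ((h_weight.fun_mul hf).const_mul (3 / 8))).congr_deriv ?_
  field_simp
  ring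

lemma tendsto_legendreConcomitant {l : Filter ℝ} {m : ℝ} (hl : ∀ᶠ x in l, x ∈ Ioo (-1) 1)
    (hu : Tendsto (fun x => √(1 - x ^ 2) * legendreProduct x) l (𝓝 0))
    (hv : Tendsto legendreProductFlux l (𝓝 m))
    (hw : Tendsto (fun x => legendreFluxProduct x / √(1 - x ^ 2)) l (𝓝 0))
    (hf : Tendsto (fun x => √(1 - x ^ 2) * f x) l (𝓝 a)) (hf₂ : Tendsto f₂ l (𝓝 b))
    (hh : Tendsto (fun x => √(1 - x ^ 2) * h x) l (𝓝 c)) :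
    Tendsto (legendreConcomitant f f₂ h) l (𝓝 (m * b)) := by
  have h_lim := (((hv.mul hf₂).sub (hu.mul hh)).add ((hw.mul hf).const_mul 2)).add
    ((hu.mul hf).const_mul (3 / 8))
  simp only [zero_mul, mul_zero, sub_zero, add_zero] at h_lim
  refine h_lim.congr' (hl.mono fun x hx => ?_)
  have h_pos : 0 < 1 - x ^ 2 := by nlinarith [hx.1, hx.2]
  have h_ne : √(1 - x ^ 2) ≠ 0 := (Real.sqrt_pos.2 h_pos).ne'
  rw [legendreConcomitant, ← Real.sq_sqrt h_pos.le, Real.sqrt_sq (Real.sqrt_nonneg _)]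
  field_simp

lemma tendsto_legendreConcomitant_right (hf : Tendsto (fun x => √(1 - x ^ 2) * f x) (𝓝[<] 1) (𝓝 a))
    (hf₂ : Tendsto f₂ (𝓝[<] 1) (𝓝 b))
    (hh : Tendsto (fun x => √(1 - x ^ 2) * h x) (𝓝[<] 1) (𝓝 c)) :
    Tendsto (legendreConcomitant f f₂ h) (𝓝[<] 1) (𝓝 (2 * √2 * π * b)) :=
  tendsto_legendreConcomitant (Ioo_mem_nhdsLT (by norm_num)) tendsto_sqrt_mul_legendreProduct
    tendsto_legendreProductFlux tendsto_legendreFluxProduct_div_sqrt hf hf₂ hh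

lemma tendsto_legendreConcomitant_left
    (hf : Tendsto (fun x => √(1 - x ^ 2) * f x) (𝓝[>] (-1)) (𝓝 a))
    (hf₂ : Tendsto f₂ (𝓝[>] (-1)) (𝓝 b))
    (hh : Tendsto (fun x => √(1 - x ^ 2) * h x) (𝓝[>] (-1)) (𝓝 c)) :
    Tendsto (legendreConcomitant f f₂ h) (𝓝[>] (-1)) (𝓝 (-(2 * √2 * π) * b)) := by
  have h_neg : Tendsto Neg.neg (𝓝[>] (-1:ℝ)) (𝓝[<] 1) := by
    simpa using tendsto_neg_nhdsGT (a := (-1:ℝ))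
  refine tendsto_legendreConcomitant (Ioo_mem_nhdsGT (by norm_num)) ?_ ?_ ?_ hf hf₂ hh
  · simpa [Function.comp_def, legendreProduct_neg] using
      tendsto_sqrt_mul_legendreProduct.comp h_neg
  · simpa [Function.comp_def, legendreProductFlux_neg] using
      (tendsto_legendreProductFlux.comp h_neg).neg
  · simpa [Function.comp_def, legendreFluxProduct_neg] using
      tendsto_legendreFluxProduct_div_sqrt.comp h_neg

end BoundaryForm

section PoissonKernel

variable {r x c' : ℝ} {c : ℝ → ℝ}

lemma hasDerivAt_legendreRadius_arg (r x : ℝ) :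
    HasDerivAt (fun r => 1 - 2 * r * x + r ^ 2) (2 * (r - x)) r := by
  refine (((((hasDerivAt_id r).const_mul 2).mul_const x).const_sub 1).fun_add
    (hasDerivAt_pow 2 r)).congr_deriv ?_
  norm_num only
  ring

lemma hasDerivAt_div_legendreRadius_pow_left (hc : HasDerivAt c c' r)
    (h : 0 < 1 - 2 * r * x + r ^ 2) (n : ℕ) :
    HasDerivAt (fun r => c r / legendreRadius r x ^ n)
      (c' / legendreRadius r x ^ n - n * (r - x) * c r / legendreRadius r x ^ (n + 2)) r := by
  refine (hasDerivAt_div_sqrt_pow hc (hasDerivAt_legendreRadius_arg r x) h n).congr_deriv ?_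
  rw [legendreRadius]
  ring

lemma legendreRadius_arg_pos_of_mem_Ioo (hr : r ∈ Ioo (-1) 1) (hx : x ∈ Icc (-1) 1) :
    0 < 1 - 2 * r * x + r ^ 2 := by
  rcases le_total 0 r with h | h
  · nlinarith [hr.2, hx.2, mul_nonneg h (sub_nonneg.2 hx.2)]
  · nlinarith [hr.1, hx.1, mul_nonneg (neg_nonneg.2 h) (neg_le_iff_add_nonneg.1 hx.1)]

lemma continuousOn_div_legendreRadius_pow {c : ℝ → ℝ → ℝ} (hc : Continuous (Function.uncurry c))
    (n : ℕ) : ContinuousOn (Function.uncurry fun r x => c r x / legendreRadius r x ^ n)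
      (Ioo (-1) 1 ×ˢ Icc (-1) 1) := by
  refine hc.continuousOn.div (by fun_prop) ?_
  rintro ⟨r, x⟩ ⟨hr, hx⟩
  exact pow_ne_zero n (legendreRadius_pos (legendreRadius_arg_pos_of_mem_Ioo hr hx)).ne'

lemma continuousOn_right_of_uncurry {F : ℝ → ℝ → ℝ} {s t : Set ℝ}
    (h : ContinuousOn (Function.uncurry F) (s ×ˢ t)) (hr : r ∈ s) : ContinuousOn (F r) t :=
  h.comp (f := fun x => (r, x)) (by fun_prop) fun _ hx => ⟨hr, hx⟩

/-- The Poisson kernel `(1 - r²) / R(r, x)³` of the unit ball of `ℝ³`. -/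
noncomputable def ballPoissonKernel (r x : ℝ) : ℝ := (1 - r ^ 2) / legendreRadius r x ^ 3

/-- The derivative of `ballPoissonKernel` in `r`. -/
noncomputable def ballPoissonKernelDeriv (r x : ℝ) : ℝ :=
  -2 * r / legendreRadius r x ^ 3 - 3 * (1 - r ^ 2) * (r - x) / legendreRadius r x ^ 5

/-- The second derivative of `ballPoissonKernel` in `r`. -/
noncomputable def ballPoissonKernelDeriv₂ (r x : ℝ) : ℝ :=
  -2 / legendreRadius r x ^ 3 +
    (12 * r * (r - x) - 3 * (1 - r ^ 2)) / legendreRadius r x ^ 5 +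
    15 * (1 - r ^ 2) * (r - x) ^ 2 / legendreRadius r x ^ 7

/-- The value `(1 - x²) ∂/∂x (1 / R(r, x))` of the Legendre flux of the generating function. -/
noncomputable def generatingFlux (r x : ℝ) : ℝ := (1 - x ^ 2) * (r / legendreRadius r x ^ 3)

/-- The derivative of `generatingFlux` in `x`. -/
noncomputable def generatingFluxDeriv (r x : ℝ) : ℝ :=
  -2 * x * r / legendreRadius r x ^ 3 + 3 * (1 - x ^ 2) * r ^ 2 / legendreRadius r x ^ 5

lemma continuousOn_ballPoissonKernel :
    ContinuousOn (Function.uncurry ballPoissonKernel) (Ioo (-1) 1 ×ˢ Icc (-1) 1) :=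
  continuousOn_div_legendreRadius_pow (by unfold Function.uncurry; fun_prop) 3

lemma continuousOn_ballPoissonKernelDeriv :
    ContinuousOn (Function.uncurry ballPoissonKernelDeriv) (Ioo (-1) 1 ×ˢ Icc (-1) 1) :=
  (continuousOn_div_legendreRadius_pow (c := fun r _ => -2 * r)
    (by unfold Function.uncurry; fun_prop) 3).sub
    (continuousOn_div_legendreRadius_pow (c := fun r x => 3 * (1 - r ^ 2) * (r - x))
      (by unfold Function.uncurry; fun_prop) 5)

lemma continuousOn_ballPoissonKernelDeriv₂ :
    ContinuousOn (Function.uncurry ballPoissonKernelDeriv₂) (Ioo (-1) 1 ×ˢ Icc (-1) 1) :=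
  ((continuousOn_div_legendreRadius_pow (c := fun _ _ => -2)
    (by unfold Function.uncurry; fun_prop) 3).add
    (continuousOn_div_legendreRadius_pow (c := fun r x => 12 * r * (r - x) - 3 * (1 - r ^ 2))
      (by unfold Function.uncurry; fun_prop) 5)).add
    (continuousOn_div_legendreRadius_pow (c := fun r x => 15 * (1 - r ^ 2) * (r - x) ^ 2)
      (by unfold Function.uncurry; fun_prop) 7)

variable (hr : r ∈ Ioo (-1) 1)

include hr

lemma hasDerivAt_ballPoissonKernel (hx : x ∈ Icc (-1) 1) :
    HasDerivAt (fun r => ballPoissonKernel r x) (ballPoissonKernelDeriv r x) r := by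
  have h_num : HasDerivAt (fun r : ℝ => 1 - r ^ 2) (-2 * r) r := by
    simpa using (hasDerivAt_pow 2 r).const_sub 1
  refine (hasDerivAt_div_legendreRadius_pow_left h_num
    (legendreRadius_arg_pos_of_mem_Ioo hr hx) 3).congr_deriv ?_
  rw [ballPoissonKernelDeriv]
  push_cast
  ring

lemma hasDerivAt_ballPoissonKernelDeriv (hx : x ∈ Icc (-1) 1) :
    HasDerivAt (fun r => ballPoissonKernelDeriv r x) (ballPoissonKernelDeriv₂ r x) r := by
  have h_pos := legendreRadius_arg_pos_of_mem_Ioo hr hx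
  have h_num : HasDerivAt (fun r : ℝ => -2 * r) (-2) r := by
    simpa using (hasDerivAt_id r).const_mul (-2)
  have h_num' : HasDerivAt (fun r : ℝ => 3 * (1 - r ^ 2) * (r - x))
      (3 * (-2 * r * (r - x) + (1 - r ^ 2))) r := by
    refine ((((hasDerivAt_pow 2 r).const_sub 1).const_mul 3).fun_mul
      ((hasDerivAt_id r).sub_const x)).congr_deriv ?_
    simp only [id_eq]
    norm_num only
    ring
  refine ((hasDerivAt_div_legendreRadius_pow_left h_num h_pos 3).fun_sub
    (hasDerivAt_div_legendreRadius_pow_left h_num' h_pos 5)).congr_deriv ?_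
  rw [ballPoissonKernelDeriv₂]
  push_cast
  ring

lemma hasDerivAt_one_div_legendreRadius (hx : x ∈ Ioo (-1) 1) :
    HasDerivAt (fun x => 1 / legendreRadius r x) (generatingFlux r x / (1 - x ^ 2)) x := by
  have h_ne : 1 - x ^ 2 ≠ 0 := by nlinarith [hx.1, hx.2]
  have h := hasDerivAt_div_legendreRadius_pow_right (hasDerivAt_const x 1)
    (legendreRadius_arg_pos_of_mem_Ioo hr (Ioo_subset_Icc_self hx)) 1
  simp only [pow_one] at h
  refine h.congr_deriv ?_
  rw [generatingFlux, mul_div_cancel_left₀ _ h_ne]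
  simp

lemma hasDerivAt_generatingFlux (hx : x ∈ Icc (-1) 1) :
    HasDerivAt (generatingFlux r) (generatingFluxDeriv r x) x := by
  have h_weight : HasDerivAt (fun x : ℝ => 1 - x ^ 2) (-2 * x) x := by
    simpa using (hasDerivAt_pow 2 x).const_sub 1
  refine (h_weight.fun_mul (hasDerivAt_div_legendreRadius_pow_right (hasDerivAt_const x r)
    (legendreRadius_arg_pos_of_mem_Ioo hr hx) 3)).congr_deriv ?_
  rw [generatingFluxDeriv]
  push_cast
  ring

lemma hasDerivAt_generatingFluxDeriv (hx : x ∈ Icc (-1) 1) :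
    HasDerivAt (generatingFluxDeriv r) (-2 * r / legendreRadius r x ^ 3 -
      12 * x * r ^ 2 / legendreRadius r x ^ 5 +
      15 * (1 - x ^ 2) * r ^ 3 / legendreRadius r x ^ 7) x := by
  have h_pos := legendreRadius_arg_pos_of_mem_Ioo hr hx
  have h_num : HasDerivAt (fun x : ℝ => -2 * x * r) (-2 * r) x := by
    simpa using ((hasDerivAt_id x).const_mul (-2)).mul_const r
  have h_num' : HasDerivAt (fun x : ℝ => 3 * (1 - x ^ 2) * r ^ 2) (-6 * x * r ^ 2) x := by
    refine ((((hasDerivAt_pow 2 x).const_sub 1).const_mul 3).mul_const (r ^ 2)).congr_deriv ?_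
    norm_num only
    ring
  refine ((hasDerivAt_div_legendreRadius_pow_right h_num h_pos 3).fun_add
    (hasDerivAt_div_legendreRadius_pow_right h_num' h_pos 5)).congr_deriv ?_
  push_cast
  ring

-- The operator dual to the equation of `u` acts on the generating function `1 / R` in the same way
-- as the operator of the equation of `K` acts on the Poisson kernel in the variable `r`.
lemma hasDerivAt_legendreConcomitant_generating (hx : x ∈ Ioo (-1) 1) :
    HasDerivAt (legendreConcomitant (fun x => 1 / legendreRadius r x) (generatingFlux r)
      (generatingFluxDeriv r)) (legendreProduct x * ((r * ballPoissonKernel r x -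
        ((1 - 3 * r ^ 2) * ballPoissonKernelDeriv r x +
          (r - r ^ 3) * ballPoissonKernelDeriv₂ r x)) / 4)) x := by
  have hx' := Ioo_subset_Icc_self hx
  refine (hasDerivAt_legendreConcomitant hx (hasDerivAt_one_div_legendreRadius hr hx)
    (hasDerivAt_generatingFlux hr hx')
    (hasDerivAt_generatingFluxDeriv hr hx')).congr_deriv (congrArg _ ?_)
  have h_pos := legendreRadius_arg_pos_of_mem_Ioo hr hx'
  have h_ne := (legendreRadius_pos h_pos).ne'
  have h_sq := legendreRadius_sq h_pos
  have h_pow_four : legendreRadius r x ^ 4 = (1 - 2 * r * x + r ^ 2) ^ 2 := by rw [← h_sq]; ring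
  rw [ballPoissonKernel, ballPoissonKernelDeriv, ballPoissonKernelDeriv₂, generatingFlux,
    generatingFluxDeriv]
  field_simp
  simp only [h_sq, h_pow_four]
  ring

end PoissonKernel

section LegendrePoisson

variable {r : ℝ}

/-- The integral of `legendreProduct` against the Poisson kernel. -/
noncomputable def legendrePoisson (r : ℝ) : ℝ :=
  ∫ x in (-1:ℝ)..1, legendreProduct x * ballPoissonKernel r x

/-- The derivative of `legendrePoisson`. -/
noncomputable def legendrePoissonDeriv (r : ℝ) : ℝ :=
  ∫ x in (-1:ℝ)..1, legendreProduct x * ballPoissonKernelDeriv r x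

lemma intervalIntegrable_legendreProduct_mul {f : ℝ → ℝ} (hf : ContinuousOn f (Icc (-1) 1)) :
    IntervalIntegrable (fun x => legendreProduct x * f x) volume (-1) 1 :=
  intervalIntegrable_legendreProduct.mul_continuousOn (by rwa [uIcc_of_le (by norm_num)])

variable (hr : r ∈ Ioo (-1) 1)

include hr

lemma hasDerivAt_legendrePoisson :
    HasDerivAt legendrePoisson (legendrePoissonDeriv r) r :=
  hasDerivAt_intervalIntegral_mul (by norm_num) (isOpen_Ioo.mem_nhds hr)
    intervalIntegrable_legendreProduct
    (fun _ hr => continuousOn_right_of_uncurry continuousOn_ballPoissonKernel hr)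
    continuousOn_ballPoissonKernelDeriv fun _ hr _ hx => hasDerivAt_ballPoissonKernel hr hx

lemma hasDerivAt_legendrePoissonDeriv : HasDerivAt legendrePoissonDeriv
    (∫ x in (-1:ℝ)..1, legendreProduct x * ballPoissonKernelDeriv₂ r x) r :=
  hasDerivAt_intervalIntegral_mul (by norm_num) (isOpen_Ioo.mem_nhds hr)
    intervalIntegrable_legendreProduct
    (fun _ hr => continuousOn_right_of_uncurry continuousOn_ballPoissonKernelDeriv hr)
    continuousOn_ballPoissonKernelDeriv₂ fun _ hr _ hx => hasDerivAt_ballPoissonKernelDeriv hr hx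

lemma integral_legendreProduct_mul_ballPoissonKernel_ode :
    ∫ x in (-1:ℝ)..1, legendreProduct x * ((r * ballPoissonKernel r x -
      ((1 - 3 * r ^ 2) * ballPoissonKernelDeriv r x +
        (r - r ^ 3) * ballPoissonKernelDeriv₂ r x)) / 4) = 0 := by
  have h_lt : (-1:ℝ) < 1 := by norm_num
  have h_gen : ContinuousOn (fun x => 1 / legendreRadius r x) (Icc (-1) 1) := fun x hx =>
    ContinuousAt.continuousWithinAt (continuousAt_const.div (by fun_prop)
      (legendreRadius_pos (legendreRadius_arg_pos_of_mem_Ioo hr hx)).ne')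
  have h_flux : ContinuousOn (generatingFlux r) (Icc (-1) 1) := fun x hx =>
    (hasDerivAt_generatingFlux hr hx).continuousAt.continuousWithinAt
  have h_flux' : ContinuousOn (generatingFluxDeriv r) (Icc (-1) 1) := fun x hx =>
    (hasDerivAt_generatingFluxDeriv hr hx).continuousAt.continuousWithinAt
  have h_sqrt : ContinuousOn (fun x : ℝ => √(1 - x ^ 2)) (Icc (-1) 1) := by fun_prop
  have h_cont : ContinuousOn (fun x => (r * ballPoissonKernel r x -
      ((1 - 3 * r ^ 2) * ballPoissonKernelDeriv r x +
        (r - r ^ 3) * ballPoissonKernelDeriv₂ r x)) / 4) (Icc (-1) 1) := by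
    have h₀ := continuousOn_right_of_uncurry continuousOn_ballPoissonKernel hr
    have h₁ := continuousOn_right_of_uncurry continuousOn_ballPoissonKernelDeriv hr
    have h₂ := continuousOn_right_of_uncurry continuousOn_ballPoissonKernelDeriv₂ hr
    fun_prop
  rw [intervalIntegral.integral_eq_sub_of_hasDerivAt_of_tendsto h_lt
    (fun x hx => hasDerivAt_legendreConcomitant_generating hr hx)
    (intervalIntegrable_legendreProduct_mul h_cont)
    (tendsto_legendreConcomitant_left
      (tendsto_nhdsGT_of_continuousOn_Icc h_lt (h_sqrt.mul h_gen))
      (tendsto_nhdsGT_of_continuousOn_Icc h_lt h_flux)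
      (tendsto_nhdsGT_of_continuousOn_Icc h_lt (h_sqrt.mul h_flux')))
    (tendsto_legendreConcomitant_right
      (tendsto_nhdsLT_of_continuousOn_Icc h_lt (h_sqrt.mul h_gen))
      (tendsto_nhdsLT_of_continuousOn_Icc h_lt h_flux)
      (tendsto_nhdsLT_of_continuousOn_Icc h_lt (h_sqrt.mul h_flux')))]
  simp [generatingFlux]

lemma hasDerivAt_mul_legendrePoissonDeriv :
    HasDerivAt (fun r => (r - r ^ 3) * legendrePoissonDeriv r) (r * legendrePoisson r) r := by
  have h_coeff : HasDerivAt (fun r : ℝ => r - r ^ 3) (1 - 3 * r ^ 2) r := by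
    simpa using (hasDerivAt_id r).fun_sub (hasDerivAt_pow 3 r)
  refine (h_coeff.fun_mul (hasDerivAt_legendrePoissonDeriv hr)).congr_deriv ?_
  have h_ode := integral_legendreProduct_mul_ballPoissonKernel_ode hr
  have h₀ := intervalIntegrable_legendreProduct_mul
    (continuousOn_right_of_uncurry continuousOn_ballPoissonKernel hr)
  have h₁ := intervalIntegrable_legendreProduct_mul
    (continuousOn_right_of_uncurry continuousOn_ballPoissonKernelDeriv hr)
  have h₂ := intervalIntegrable_legendreProduct_mul
    (continuousOn_right_of_uncurry continuousOn_ballPoissonKernelDeriv₂ hr)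
  have h_split : ∀ x, legendreProduct x * ((r * ballPoissonKernel r x -
      ((1 - 3 * r ^ 2) * ballPoissonKernelDeriv r x +
        (r - r ^ 3) * ballPoissonKernelDeriv₂ r x)) / 4) =
      r / 4 * (legendreProduct x * ballPoissonKernel r x) -
        ((1 - 3 * r ^ 2) / 4 * (legendreProduct x * ballPoissonKernelDeriv r x) +
          (r - r ^ 3) / 4 * (legendreProduct x * ballPoissonKernelDeriv₂ r x)) := fun x => by ring
  simp only [h_split] at h_ode
  rw [intervalIntegral.integral_sub (h₀.const_mul _) ((h₁.const_mul _).add (h₂.const_mul _)),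
    intervalIntegral.integral_add (h₁.const_mul _) (h₂.const_mul _),
    intervalIntegral.integral_const_mul, intervalIntegral.integral_const_mul,
    intervalIntegral.integral_const_mul] at h_ode
  rw [legendrePoisson, legendrePoissonDeriv]
  linear_combination -4 * h_ode

end LegendrePoisson

section EllipticEquation

variable {k θ c' : ℝ} {c : ℝ → ℝ}

/-- Legendre's `Δ(k, θ) = √(1 - k² sin² θ)`. -/
noncomputable def ellipticDelta (k θ : ℝ) : ℝ := √(1 - k ^ 2 * sin θ ^ 2)

lemma ellipticDelta_pos (hk : k ^ 2 < 1) (θ : ℝ) : 0 < ellipticDelta k θ :=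
  Real.sqrt_pos.2 (one_sub_sq_mul_sin_sq_pos hk θ)

lemma ellipticDelta_sq (hk : k ^ 2 < 1) (θ : ℝ) :
    ellipticDelta k θ ^ 2 = 1 - k ^ 2 * sin θ ^ 2 :=
  Real.sq_sqrt (one_sub_sq_mul_sin_sq_pos hk θ).le

lemma hasDerivAt_div_ellipticDelta_pow_left (hk : k ^ 2 < 1) (hc : HasDerivAt c c' k) (n : ℕ) :
    HasDerivAt (fun k => c k / ellipticDelta k θ ^ n)
      (c' / ellipticDelta k θ ^ n + n * k * sin θ ^ 2 * c k / ellipticDelta k θ ^ (n + 2)) k := by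
  have h_arg : HasDerivAt (fun k => 1 - k ^ 2 * sin θ ^ 2) (-(2 * k * sin θ ^ 2)) k := by
    simpa using ((hasDerivAt_pow 2 k).mul_const (sin θ ^ 2)).const_sub 1
  refine (hasDerivAt_div_sqrt_pow hc h_arg (one_sub_sq_mul_sin_sq_pos hk θ) n).congr_deriv ?_
  rw [ellipticDelta]
  ring

lemma continuousOn_div_ellipticDelta_pow {c : ℝ → ℝ → ℝ} (hc : Continuous (Function.uncurry c))
    (n : ℕ) : ContinuousOn (Function.uncurry fun k θ => c k θ / ellipticDelta k θ ^ n)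
      (Ioo (-1) 1 ×ˢ Icc 0 (π / 2)) := by
  refine hc.continuousOn.div (by unfold ellipticDelta; fun_prop) ?_
  rintro ⟨k, θ⟩ ⟨hk, _⟩
  exact pow_ne_zero n (ellipticDelta_pos ((sq_lt_one_iff_abs_lt_one k).2 (abs_lt.2 hk)) θ).ne'

/-- The derivative of `ellipticK`. -/
noncomputable def ellipticKDeriv (k : ℝ) : ℝ :=
  ∫ θ in (0:ℝ)..(π / 2), k * sin θ ^ 2 / ellipticDelta k θ ^ 3

/-- The second derivative of `ellipticK`. -/
noncomputable def ellipticKDeriv₂ (k : ℝ) : ℝ := ∫ θ in (0:ℝ)..(π / 2),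
  (sin θ ^ 2 / ellipticDelta k θ ^ 3 + 3 * k ^ 2 * sin θ ^ 4 / ellipticDelta k θ ^ 5)

lemma ellipticK_eq_integral_ellipticDelta (k : ℝ) :
    ellipticK k = ∫ θ in (0:ℝ)..(π / 2), 1 / ellipticDelta k θ ^ 1 := by
  simp only [ellipticK, ellipticDelta, pow_one]

lemma continuousOn_ellipticK_integrand :
    ContinuousOn (Function.uncurry fun k θ => 1 / ellipticDelta k θ ^ 1)
      (Ioo (-1) 1 ×ˢ Icc 0 (π / 2)) :=
  continuousOn_div_ellipticDelta_pow (c := fun _ _ => 1) (by unfold Function.uncurry; fun_prop) 1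

lemma continuousOn_ellipticKDeriv_integrand :
    ContinuousOn (Function.uncurry fun k θ => k * sin θ ^ 2 / ellipticDelta k θ ^ 3)
      (Ioo (-1) 1 ×ˢ Icc 0 (π / 2)) :=
  continuousOn_div_ellipticDelta_pow (c := fun k θ => k * sin θ ^ 2)
    (by unfold Function.uncurry; fun_prop) 3

lemma continuousOn_ellipticKDeriv₂_integrand : ContinuousOn (Function.uncurry fun k θ =>
    sin θ ^ 2 / ellipticDelta k θ ^ 3 + 3 * k ^ 2 * sin θ ^ 4 / ellipticDelta k θ ^ 5)
      (Ioo (-1) 1 ×ˢ Icc 0 (π / 2)) :=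
  (continuousOn_div_ellipticDelta_pow (c := fun _ θ => sin θ ^ 2)
    (by unfold Function.uncurry; fun_prop) 3).add
    (continuousOn_div_ellipticDelta_pow (c := fun k θ => 3 * k ^ 2 * sin θ ^ 4)
      (by unfold Function.uncurry; fun_prop) 5)

lemma intervalIntegrable_of_continuousOn_uncurry {F : ℝ → ℝ → ℝ} {s : Set ℝ} {a b : ℝ}
    (hab : a ≤ b) (hF : ContinuousOn (Function.uncurry F) (s ×ˢ Icc a b)) (hk : k ∈ s) :
    IntervalIntegrable (F k) volume a b :=
  ContinuousOn.intervalIntegrable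
    (by rw [uIcc_of_le hab]; exact continuousOn_right_of_uncurry hF hk)

lemma hasDerivAt_ellipticDelta_antideriv (hk : k ^ 2 < 1) (θ : ℝ) :
    HasDerivAt (fun θ => -(k * (sin θ * cos θ)) / ellipticDelta k θ ^ 3)
      ((1 - 3 * k ^ 2) * (k * sin θ ^ 2 / ellipticDelta k θ ^ 3) +
        (k - k ^ 3) * (sin θ ^ 2 / ellipticDelta k θ ^ 3 +
          3 * k ^ 2 * sin θ ^ 4 / ellipticDelta k θ ^ 5) -
        k * (1 / ellipticDelta k θ ^ 1)) θ := by
  have h_arg : HasDerivAt (fun θ => 1 - k ^ 2 * sin θ ^ 2)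
      (-(k ^ 2 * (2 * sin θ * cos θ))) θ := by
    simpa using (((Real.hasDerivAt_sin θ).fun_pow 2).const_mul (k ^ 2)).const_sub 1
  have h_num : HasDerivAt (fun θ => -(k * (sin θ * cos θ)))
      (-(k * (cos θ * cos θ + sin θ * -sin θ))) θ :=
    (((Real.hasDerivAt_sin θ).fun_mul (Real.hasDerivAt_cos θ)).const_mul k).fun_neg
  refine (hasDerivAt_div_sqrt_pow h_num h_arg
    (one_sub_sq_mul_sin_sq_pos hk θ) 3).congr_deriv ?_
  rw [← ellipticDelta]
  have h_ne := (ellipticDelta_pos hk θ).ne'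
  have h_sq := ellipticDelta_sq hk θ
  have h_pow_four : ellipticDelta k θ ^ 4 = (1 - k ^ 2 * sin θ ^ 2) ^ 2 := by rw [← h_sq]; ring
  have h_cos : cos θ ^ 2 = 1 - sin θ ^ 2 := Real.cos_sq' θ
  field_simp
  simp only [h_sq, h_pow_four, h_cos]
  linear_combination
    3 * k ^ 3 * sin θ ^ 2 * (1 - sin θ ^ 2) * ellipticDelta k θ ^ 3 * h_sq

variable (hk : k ∈ Ioo (-1) 1)

include hk

lemma sq_lt_one_of_mem_Ioo : k ^ 2 < 1 := (sq_lt_one_iff_abs_lt_one k).2 (abs_lt.2 hk)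

lemma hasDerivAt_ellipticK : HasDerivAt ellipticK (ellipticKDeriv k) k := by
  rw [funext ellipticK_eq_integral_ellipticDelta]
  refine hasDerivAt_intervalIntegral Real.pi_div_two_pos.le (isOpen_Ioo.mem_nhds hk)
    (fun k hk => continuousOn_right_of_uncurry continuousOn_ellipticK_integrand hk)
    continuousOn_ellipticKDeriv_integrand fun k hk θ _ => ?_
  refine (hasDerivAt_div_ellipticDelta_pow_left (sq_lt_one_of_mem_Ioo hk)
    (hasDerivAt_const k 1) 1).congr_deriv ?_
  push_cast
  ring

lemma hasDerivAt_ellipticKDeriv : HasDerivAt ellipticKDeriv (ellipticKDeriv₂ k) k := by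
  refine hasDerivAt_intervalIntegral Real.pi_div_two_pos.le (isOpen_Ioo.mem_nhds hk)
    (fun k hk => continuousOn_right_of_uncurry continuousOn_ellipticKDeriv_integrand hk)
    continuousOn_ellipticKDeriv₂_integrand fun k hk θ _ => ?_
  refine (hasDerivAt_div_ellipticDelta_pow_left (sq_lt_one_of_mem_Ioo hk)
    ((hasDerivAt_id k).mul_const (sin θ ^ 2)) 3).congr_deriv ?_
  simp only [id_eq]
  push_cast
  ring

lemma ellipticK_ode :
    (1 - 3 * k ^ 2) * ellipticKDeriv k + (k - k ^ 3) * ellipticKDeriv₂ k = k * ellipticK k := by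
  have h₀ := intervalIntegrable_of_continuousOn_uncurry Real.pi_div_two_pos.le
    continuousOn_ellipticK_integrand hk
  have h₁ := intervalIntegrable_of_continuousOn_uncurry Real.pi_div_two_pos.le
    continuousOn_ellipticKDeriv_integrand hk
  have h₂ := intervalIntegrable_of_continuousOn_uncurry Real.pi_div_two_pos.le
    continuousOn_ellipticKDeriv₂_integrand hk
  have h_exact := intervalIntegral.integral_eq_sub_of_hasDerivAt
    (fun θ _ => hasDerivAt_ellipticDelta_antideriv (sq_lt_one_of_mem_Ioo hk) θ)
    (((h₁.const_mul _).add (h₂.const_mul _)).sub (h₀.const_mul _))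
  rw [intervalIntegral.integral_sub ((h₁.const_mul _).add (h₂.const_mul _)) (h₀.const_mul _),
    intervalIntegral.integral_add (h₁.const_mul _) (h₂.const_mul _),
    intervalIntegral.integral_const_mul, intervalIntegral.integral_const_mul,
    intervalIntegral.integral_const_mul, ← ellipticK_eq_integral_ellipticDelta,
    ← ellipticKDeriv, ← ellipticKDeriv₂] at h_exact
  simpa [sub_eq_zero] using h_exact

lemma hasDerivAt_mul_ellipticKDeriv :
    HasDerivAt (fun k => (k - k ^ 3) * ellipticKDeriv k) (k * ellipticK k) k := by
  have h_coeff : HasDerivAt (fun k : ℝ => k - k ^ 3) (1 - 3 * k ^ 2) k := by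
    simpa using (hasDerivAt_id k).fun_sub (hasDerivAt_pow 3 k)
  exact (h_coeff.fun_mul (hasDerivAt_ellipticKDeriv hk)).congr_deriv (ellipticK_ode hk)

lemma ellipticK_pos : 0 < ellipticK k := by
  rw [ellipticK_eq_integral_ellipticDelta]
  exact intervalIntegral.intervalIntegral_pos_of_pos
    (intervalIntegrable_of_continuousOn_uncurry Real.pi_div_two_pos.le
      continuousOn_ellipticK_integrand hk)
    (fun θ => one_div_pos.2 (pow_pos (ellipticDelta_pos (sq_lt_one_of_mem_Ioo hk) θ) 1))
    Real.pi_div_two_pos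

omit hk

lemma exists_eqOn_legendrePoisson_const_mul_ellipticK :
    ∃ A, EqOn legendrePoisson (fun r => A * ellipticK r) (Ioo 0 1) := by
  have h_sub : Ioo (0:ℝ) 1 ⊆ Ioo (-1) 1 := Ioo_subset_Ioo_left (by norm_num)
  refine exists_eqOn_const_mul_of_hasDerivAt_mul_deriv (p := fun r => r - r ^ 3) (q := id)
    isOpen_Ioo isPreconnected_Ioo isOpen_Ioo isPreconnected_Ioo h_sub (x₀ := 0) (by norm_num)
    (by norm_num) (fun r hr => ?_) (fun r hr => (ellipticK_pos (h_sub hr)).ne')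
    (fun r hr => hasDerivAt_legendrePoisson hr)
    (fun r hr => hasDerivAt_mul_legendrePoissonDeriv hr)
    (fun r hr => hasDerivAt_ellipticK hr) fun r hr => hasDerivAt_mul_ellipticKDeriv hr
  have h_pos : 0 < r * (1 - r ^ 2) :=
    mul_pos hr.1 (sub_pos.2 (sq_lt_one_of_mem_Ioo (h_sub hr)))
  exact ne_of_gt (by linarith)

end EllipticEquation

section EllipticMoment

variable {r θ : ℝ}

lemma hasDerivAt_ellipticDelta_left (hr : r ^ 2 < 1) (θ : ℝ) :
    HasDerivAt (fun r => ellipticDelta r θ) (-(r * sin θ ^ 2) / ellipticDelta r θ) r := by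
  have h_arg : HasDerivAt (fun r => 1 - r ^ 2 * sin θ ^ 2) (-(2 * r * sin θ ^ 2)) r := by
    simpa using ((hasDerivAt_pow 2 r).mul_const (sin θ ^ 2)).const_sub 1
  refine (h_arg.sqrt (one_sub_sq_mul_sin_sq_pos hr θ).ne').congr_deriv ?_
  rw [← ellipticDelta]
  ring

lemma setLIntegral_div_ellipticDelta (hθ : θ ∈ Ioo 0 (π / 2)) :
    ∫⁻ r in Ioo 0 1, ofReal (r / ellipticDelta r θ) = ofReal (1 / (1 + cos θ)) := by
  have h_sin : sin θ ≠ 0 := (sin_pos_of_pos_of_lt_pi hθ.1 (by linarith [hθ.2, pi_pos])).ne'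
  have h_cos : 0 < cos θ := cos_pos_of_mem_Ioo ⟨by linarith [hθ.1, pi_pos], hθ.2⟩
  have h_cont : ContinuousOn (fun r => (1 - ellipticDelta r θ) / sin θ ^ 2) (Icc 0 1) := by
    unfold ellipticDelta; fun_prop
  have h_nonneg : ∀ r ∈ Ioo 0 1, 0 ≤ r / ellipticDelta r θ := fun r hr =>
    div_nonneg hr.1.le (Real.sqrt_nonneg _)
  rw [setLIntegral_ofReal_eq_sub_of_hasDerivAt_of_tendsto zero_lt_one (fun r hr => ?_) h_nonneg
    (tendsto_nhdsGT_of_continuousOn_Icc zero_lt_one h_cont)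
    (tendsto_nhdsLT_of_continuousOn_Icc zero_lt_one h_cont)]
  · have h_one : ellipticDelta 1 θ = cos θ := by
      rw [ellipticDelta, one_pow, one_mul, ← cos_sq', Real.sqrt_sq h_cos.le]
    have h_zero : ellipticDelta 0 θ = 1 := by simp [ellipticDelta]
    rw [h_one, h_zero, sub_self, zero_div, sub_zero]
    congr 1
    rw [div_eq_div_iff (by positivity) (by positivity)]
    linear_combination -sin_sq_add_cos_sq θ
  · have hr' : r ^ 2 < 1 := pow_lt_one₀ hr.1.le hr.2 two_ne_zero
    have h_ne := (ellipticDelta_pos hr' θ).ne'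
    refine (((hasDerivAt_ellipticDelta_left hr' θ).const_sub 1).div_const _).congr_deriv ?_
    field_simp

lemma setLIntegral_one_div_one_add_cos :
    ∫⁻ θ in Ioo 0 (π / 2), ofReal (1 / (1 + cos θ)) = 1 := by
  have h_pos : ∀ θ ∈ Icc 0 (π / 2), 0 < 1 + cos θ := fun θ hθ => by
    have := cos_nonneg_of_mem_Icc ⟨by linarith [hθ.1, pi_pos], hθ.2⟩
    linarith
  have h_cont : ContinuousOn (fun θ => sin θ / (1 + cos θ)) (Icc 0 (π / 2)) :=
    ContinuousOn.div (by fun_prop) (by fun_prop) fun θ hθ => (h_pos θ hθ).ne'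
  rw [setLIntegral_ofReal_eq_sub_of_hasDerivAt_of_tendsto Real.pi_div_two_pos (fun θ hθ => ?_)
    (fun θ hθ => (one_div_pos.2 (h_pos θ (Ioo_subset_Icc_self hθ))).le)
    (tendsto_nhdsGT_of_continuousOn_Icc Real.pi_div_two_pos h_cont)
    (tendsto_nhdsLT_of_continuousOn_Icc Real.pi_div_two_pos h_cont)]
  · simp
  · have h_ne := (h_pos θ (Ioo_subset_Icc_self hθ)).ne'
    refine ((hasDerivAt_sin θ).fun_div ((hasDerivAt_cos θ).const_add 1) h_ne).congr_deriv ?_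
    field_simp
    linear_combination sin_sq_add_cos_sq θ

lemma setLIntegral_mul_ellipticK : ∫⁻ r in Ioo 0 1, ofReal (r * ellipticK r) = 1 := by
  have h_meas : Measurable (Function.uncurry fun r θ => ofReal (r / ellipticDelta r θ)) := by
    unfold Function.uncurry ellipticDelta; fun_prop
  rw [← setLIntegral_one_div_one_add_cos,
    ← setLIntegral_congr_fun measurableSet_Ioo fun θ hθ => setLIntegral_div_ellipticDelta hθ,
    ← setLIntegral_setLIntegral_swap h_meas]
  refine setLIntegral_congr_fun measurableSet_Ioo fun r hr => ?_
  rw [ENNReal.ofReal_mul hr.1.le, ofReal_ellipticK (pow_lt_one₀ hr.1.le hr.2 two_ne_zero),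
    ← setLIntegral_ofReal_const_mul hr.1.le]
  simp only [mul_one_div, ellipticDelta]

end EllipticMoment

section PoissonMoment

variable {r x : ℝ}

/-- The test function whose `legendreConcomitant` is a primitive of a quarter of
`legendreProduct * ballPoissonMoment`. -/
noncomputable def logTest (x : ℝ) : ℝ := log (√2 + √(1 - x)) - log √(1 - x)

/-- The first moment `∫₀¹ r P(r, x) dr` of the Poisson kernel, in closed form. -/
noncomputable def ballPoissonMoment (x : ℝ) : ℝ :=
  (6 * x - 4) / (√2 * √(1 - x)) + 3 - 3 * x * logTest x

lemma ballPoissonKernel_nonneg (hr : r ∈ Icc (-1) 1) (x : ℝ) : 0 ≤ ballPoissonKernel r x :=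
  div_nonneg (by nlinarith [hr.1, hr.2]) (pow_nonneg (Real.sqrt_nonneg _) 3)

lemma legendreRadius_one_left (x : ℝ) : legendreRadius 1 x = √2 * √(1 - x) := by
  rw [legendreRadius, ← Real.sqrt_mul zero_le_two]
  ring_nf

lemma legendreRadius_zero_left (x : ℝ) : legendreRadius 0 x = 1 := by simp [legendreRadius]

variable (hx : x ∈ Ioo (-1) 1)

include hx

lemma legendreRadius_add_sub_pos (r : ℝ) : 0 < legendreRadius r x + r - x := by
  have : x - r < legendreRadius r x := Real.lt_sqrt_of_sq_lt (by nlinarith [hx.1, hx.2])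
  linarith

lemma hasDerivAt_ballPoissonMoment_antideriv (h : 0 < 1 - 2 * r * x + r ^ 2) :
    HasDerivAt (fun r => (-r ^ 2 + 6 * x * r - 3) / legendreRadius r x ^ 1 -
      3 * x * log (legendreRadius r x + r - x)) (r * ballPoissonKernel r x) r := by
  have h_ne := (legendreRadius_pos h).ne'
  have h_sq := legendreRadius_sq h
  have h_log_ne := (legendreRadius_add_sub_pos hx r).ne'
  have h_num : HasDerivAt (fun r => -r ^ 2 + 6 * x * r - 3) (-2 * r + 6 * x) r := by
    simpa using ((hasDerivAt_pow 2 r).fun_neg.fun_add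
      ((hasDerivAt_id r).const_mul (6 * x))).sub_const 3
  have h_radius : HasDerivAt (fun r => legendreRadius r x) ((r - x) / legendreRadius r x) r := by
    refine ((hasDerivAt_legendreRadius_arg r x).sqrt h.ne').congr_deriv ?_
    rw [← legendreRadius]
    field_simp
  have h_log :
      HasDerivAt (fun r => log (legendreRadius r x + r - x)) (1 / legendreRadius r x) r := by
    refine (((h_radius.fun_add (hasDerivAt_id r)).sub_const x).log h_log_ne).congr_deriv ?_
    rw [id_eq]
    field_simp
    ring
  refine ((hasDerivAt_div_legendreRadius_pow_left h_num h 1).fun_sub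
    (h_log.const_mul (3 * x))).congr_deriv ?_
  have h_inv : 1 / legendreRadius r x = (1 - 2 * r * x + r ^ 2) / legendreRadius r x ^ 3 := by
    rw [← h_sq]
    field_simp
  rw [ballPoissonKernel]
  push_cast
  linear_combination (3 * x - 2 * r) * h_inv

lemma ballPoissonMoment_eq_sub : ballPoissonMoment x =
    (-1 ^ 2 + 6 * x * 1 - 3) / legendreRadius 1 x ^ 1 - 3 * x * log (legendreRadius 1 x + 1 - x) -
      ((-0 ^ 2 + 6 * x * 0 - 3) / legendreRadius 0 x ^ 1 -
        3 * x * log (legendreRadius 0 x + 0 - x)) := by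
  have h_pos : 0 < √(1 - x) := Real.sqrt_pos.2 (by linarith [hx.2])
  have h_sq : √(1 - x) ^ 2 = 1 - x := Real.sq_sqrt (by linarith [hx.2])
  have h_one : legendreRadius 1 x + 1 - x = √(1 - x) * (√2 + √(1 - x)) := by
    rw [legendreRadius_one_left]
    linear_combination -h_sq
  have h_zero : legendreRadius 0 x + 0 - x = √(1 - x) * √(1 - x) := by
    rw [legendreRadius_zero_left]
    linear_combination -h_sq
  rw [h_one, h_zero, log_mul h_pos.ne' (by positivity), log_mul h_pos.ne' h_pos.ne',
    legendreRadius_one_left, legendreRadius_zero_left, ballPoissonMoment, logTest]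
  ring

lemma continuousOn_mul_ballPoissonKernel :
    ContinuousOn (fun r => r * ballPoissonKernel r x) (Icc 0 1) := by
  unfold ballPoissonKernel
  exact continuousOn_id.mul (ContinuousOn.div (by fun_prop) (by fun_prop) fun r hr =>
    pow_ne_zero 3 (legendreRadius_pos (legendreRadius_arg_pos hr.1 hx.2)).ne')

lemma integral_mul_ballPoissonKernel :
    ∫ r in (0:ℝ)..1, r * ballPoissonKernel r x = ballPoissonMoment x := by
  have h_deriv : ∀ r ∈ uIcc 0 1, HasDerivAt _ (r * ballPoissonKernel r x) r := fun r hr => by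
    rw [uIcc_of_le zero_le_one] at hr
    exact hasDerivAt_ballPoissonMoment_antideriv hx (legendreRadius_arg_pos hr.1 hx.2)
  rw [ballPoissonMoment_eq_sub hx, intervalIntegral.integral_eq_sub_of_hasDerivAt h_deriv]
  exact ContinuousOn.intervalIntegrable
    (by rw [uIcc_of_le zero_le_one]; exact continuousOn_mul_ballPoissonKernel hx)

omit hx in
lemma mul_ballPoissonKernel_nonneg (hr : r ∈ Icc 0 1) (x : ℝ) : 0 ≤ r * ballPoissonKernel r x :=
  mul_nonneg hr.1 (ballPoissonKernel_nonneg ⟨by linarith [hr.1], hr.2⟩ x)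

lemma ballPoissonMoment_nonneg : 0 ≤ ballPoissonMoment x := by
  rw [← integral_mul_ballPoissonKernel hx]
  exact intervalIntegral.integral_nonneg zero_le_one fun r hr => mul_ballPoissonKernel_nonneg hr x

lemma ofReal_ballPoissonMoment : ofReal (ballPoissonMoment x) =
    ∫⁻ r in Ioo 0 1, ofReal (r * ballPoissonKernel r x) := by
  rw [← integral_mul_ballPoissonKernel hx]
  exact ofReal_intervalIntegral_eq_setLIntegral zero_le_one (continuousOn_mul_ballPoissonKernel hx)
    fun r hr => mul_ballPoissonKernel_nonneg hr x

lemma hasDerivAt_sqrt_one_sub :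
    HasDerivAt (fun x : ℝ => √(1 - x)) (-1 / (2 * √(1 - x))) x :=
  ((hasDerivAt_id x).const_sub 1).sqrt (sub_pos.2 hx.2).ne'

lemma hasDerivAt_logTest :
    HasDerivAt logTest ((1 - √(1 - x) / √2) / (1 - x ^ 2)) x := by
  have h_pos : 0 < √(1 - x) := Real.sqrt_pos.2 (sub_pos.2 hx.2)
  have h_sq : √(1 - x) ^ 2 = 1 - x := Real.sq_sqrt (sub_pos.2 hx.2).le
  have h_ne : 1 - x ^ 2 ≠ 0 := by nlinarith [hx.1, hx.2]
  have h_two : √2 ^ 2 = (2:ℝ) := Real.sq_sqrt zero_le_two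
  have h_weight : 1 - x ^ 2 = √(1 - x) ^ 2 * ((√2 - √(1 - x)) * (√2 + √(1 - x))) := by
    linear_combination -(1 - x) * h_two + (1 - x - (√2 ^ 2 - √(1 - x) ^ 2)) * h_sq
  have h_deriv := hasDerivAt_sqrt_one_sub hx
  refine (((h_deriv.const_add √2).log (by positivity)).fun_sub
    (h_deriv.log h_pos.ne')).congr_deriv ?_
  rw [eq_div_iff h_ne, h_weight]
  field_simp
  linear_combination (√2 - √(1 - x)) * h_two

lemma hasDerivAt_one_sub_sqrt_one_sub_div :
    HasDerivAt (fun x => 1 - √(1 - x) / √2) (1 / (2 * √2) / √(1 - x) ^ 1) x := by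
  refine (((hasDerivAt_sqrt_one_sub hx).div_const √2).const_sub 1).congr_deriv ?_
  field_simp

lemma hasDerivAt_const_div_sqrt_one_sub (a : ℝ) :
    HasDerivAt (fun x => a / √(1 - x) ^ 1) (a / (2 * √(1 - x) ^ 3)) x := by
  refine (hasDerivAt_div_sqrt_pow (hasDerivAt_const x a) ((hasDerivAt_id x).const_sub 1)
    (sub_pos.2 hx.2) 1).congr_deriv ?_
  simp only [id_eq]
  push_cast
  ring

lemma hasDerivAt_legendreConcomitant_logTest :
    HasDerivAt (fun x => 4 * legendreConcomitant logTest (fun x => 1 - √(1 - x) / √2)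
      (fun x => 1 / (2 * √2) / √(1 - x) ^ 1) x) (legendreProduct x * ballPoissonMoment x) x := by
  have h_pos : 0 < √(1 - x) := Real.sqrt_pos.2 (sub_pos.2 hx.2)
  have h_sq : √(1 - x) ^ 2 = 1 - x := Real.sq_sqrt (sub_pos.2 hx.2).le
  refine ((hasDerivAt_legendreConcomitant hx (hasDerivAt_logTest hx)
    (hasDerivAt_one_sub_sqrt_one_sub_div hx)
    (hasDerivAt_const_div_sqrt_one_sub hx _)).const_mul 4).congr_deriv ?_
  have h_weight : (1 - x ^ 2) / √(1 - x) ^ 3 = (1 + x) / √(1 - x) := by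
    rw [div_eq_div_iff (by positivity) (by positivity)]
    linear_combination -(1 + x) * √(1 - x) * h_sq
  have h_sqrt : √(1 - x) = (1 - x) / √(1 - x) := Real.div_sqrt.symm
  rw [ballPoissonMoment]
  linear_combination -(legendreProduct x / √2) * (h_weight + 3 * h_sqrt)

omit hx

lemma continuousOn_sqrt_one_sub_sq_mul_logTest :
    ContinuousOn (fun x => √(1 - x ^ 2) * logTest x) (Icc (-1) 1) := by
  have : Continuous fun x : ℝ => √(1 - x) * log √(1 - x) :=
    Real.continuous_mul_log.comp (by fun_prop)
  have h_cont : Continuous fun x : ℝ =>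
      √(1 + x) * (√(1 - x) * log (√2 + √(1 - x)) - √(1 - x) * log √(1 - x)) := by
    fun_prop (disch := intro; positivity)
  refine h_cont.continuousOn.congr fun x hx => ?_
  rw [show 1 - x ^ 2 = (1 + x) * (1 - x) by ring, Real.sqrt_mul (by linarith [hx.1]), logTest]
  ring

lemma sqrt_one_sub_sq_mul_div_sqrt_one_sub (hx : x ∈ Ioo (-1) 1) (a : ℝ) :
    √(1 - x ^ 2) * (a / √(1 - x) ^ 1) = a * √(1 + x) := by
  have h_ne : √(1 - x) ≠ 0 := (Real.sqrt_pos.2 (sub_pos.2 hx.2)).ne'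
  rw [show 1 - x ^ 2 = (1 + x) * (1 - x) by ring, Real.sqrt_mul (by linarith [hx.1])]
  field_simp

lemma setLIntegral_legendreProduct_mul_ballPoissonMoment :
    ∫⁻ x in Ioo (-1) 1, ofReal (legendreProduct x * ballPoissonMoment x) =
      ofReal (8 * √2 * π) := by
  have h_lt : (-1:ℝ) < 1 := by norm_num
  have h_sqrt : ContinuousOn (fun x => 1 - √(1 - x) / √2) (Icc (-1) 1) := by fun_prop
  have h_lim : ContinuousOn (fun x => 1 / (2 * √2) * √(1 + x)) (Icc (-1) 1) := by fun_prop
  have h_eq : EqOn (fun x => 1 / (2 * √2) * √(1 + x))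
      (fun x => √(1 - x ^ 2) * (1 / (2 * √2) / √(1 - x) ^ 1)) (Ioo (-1) 1) := fun x hx =>
    (sqrt_one_sub_sq_mul_div_sqrt_one_sub hx _).symm
  have h_left := tendsto_legendreConcomitant_left
    (tendsto_nhdsGT_of_continuousOn_Icc h_lt continuousOn_sqrt_one_sub_sq_mul_logTest)
    (tendsto_nhdsGT_of_continuousOn_Icc h_lt h_sqrt)
    ((tendsto_nhdsGT_of_continuousOn_Icc h_lt h_lim).congr'
      (h_eq.eventuallyEq_of_mem (Ioo_mem_nhdsGT h_lt)))
  have h_right := tendsto_legendreConcomitant_right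
    (tendsto_nhdsLT_of_continuousOn_Icc h_lt continuousOn_sqrt_one_sub_sq_mul_logTest)
    (tendsto_nhdsLT_of_continuousOn_Icc h_lt h_sqrt)
    ((tendsto_nhdsLT_of_continuousOn_Icc h_lt h_lim).congr'
      (h_eq.eventuallyEq_of_mem (Ioo_mem_nhdsLT h_lt)))
  rw [setLIntegral_ofReal_eq_sub_of_hasDerivAt_of_tendsto h_lt
    (fun x hx => hasDerivAt_legendreConcomitant_logTest hx)
    (fun x hx => mul_nonneg (legendreProduct_nonneg x) (ballPoissonMoment_nonneg hx))
    (h_left.const_mul 4) (h_right.const_mul 4)]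
  congr 1
  norm_num
  ring

end PoissonMoment

section Measurability

@[fun_prop]
lemma measurable_ellipticK : Measurable ellipticK := by
  have h_meas : Measurable (Function.uncurry fun k θ => 1 / √(1 - k ^ 2 * sin θ ^ 2)) := by
    unfold Function.uncurry; fun_prop
  unfold ellipticK
  simp only [integral_of_le Real.pi_div_two_pos.le]
  exact h_meas.stronglyMeasurable.integral_prod_right.measurable

@[fun_prop]
lemma measurable_legendreQuarter : Measurable legendreQuarter := by
  have h_meas : Measurable (Function.uncurry fun x σ =>
      4 * (1 + σ ^ 2) / legendreRadius (σ ^ 4) x) := by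
    unfold Function.uncurry; fun_prop
  unfold legendreQuarter
  simp only [integral_of_le zero_le_one]
  exact h_meas.stronglyMeasurable.integral_prod_right.measurable

@[fun_prop]
lemma measurable_legendreProduct : Measurable legendreProduct := by
  unfold legendreProduct; fun_prop

lemma measurable_uncurry_ballPoissonKernel : Measurable (Function.uncurry ballPoissonKernel) := by
  unfold Function.uncurry ballPoissonKernel; fun_prop

@[fun_prop]
lemma measurable_ballPoissonKernel {α : Type*} [MeasurableSpace α] {f g : α → ℝ}
    (hf : Measurable f) (hg : Measurable g) : Measurable fun a => ballPoissonKernel (f a) (g a) :=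
  measurable_uncurry_ballPoissonKernel.comp (hf.prodMk hg)

end Measurability

section PoissonValue

variable {r x : ℝ}

lemma legendreProduct_mul_ballPoissonKernel_nonneg (hr : r ∈ Icc (-1) 1) (x : ℝ) :
    0 ≤ legendreProduct x * ballPoissonKernel r x :=
  mul_nonneg (legendreProduct_nonneg x) (ballPoissonKernel_nonneg hr x)

lemma legendrePoisson_nonneg (hr : r ∈ Icc (-1) 1) : 0 ≤ legendrePoisson r :=
  intervalIntegral.integral_nonneg (by norm_num) fun x _ =>
    legendreProduct_mul_ballPoissonKernel_nonneg hr x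

lemma ofReal_legendrePoisson (hr : r ∈ Ioo (-1) 1) : ofReal (legendrePoisson r) =
    ∫⁻ x in Ioo (-1) 1, ofReal (legendreProduct x * ballPoissonKernel r x) := by
  have h_int := intervalIntegrable_legendreProduct_mul
    (continuousOn_right_of_uncurry continuousOn_ballPoissonKernel hr)
  rw [intervalIntegrable_iff_integrableOn_Ioo_of_le (by norm_num)] at h_int
  rw [legendrePoisson, integral_of_le (by norm_num), integral_Ioc_eq_integral_Ioo,
    ofReal_integral_eq_lintegral_ofReal h_int]
  exact ae_of_all _ (legendreProduct_mul_ballPoissonKernel_nonneg (Ioo_subset_Icc_self hr))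

lemma Ioo_zero_one_subset_Ioo_neg_one_one : Ioo (0:ℝ) 1 ⊆ Ioo (-1) 1 :=
  Ioo_subset_Ioo_left (by norm_num)

lemma setLIntegral_mul_legendrePoisson :
    ∫⁻ r in Ioo 0 1, ofReal (r * legendrePoisson r) = ofReal (8 * √2 * π) := by
  have h_left : ∀ r ∈ Ioo (0:ℝ) 1, ofReal (r * legendrePoisson r) =
      ∫⁻ x in Ioo (-1) 1, ofReal (r * (legendreProduct x * ballPoissonKernel r x)) := fun r hr => by
    rw [setLIntegral_ofReal_const_mul hr.1.le, ENNReal.ofReal_mul hr.1.le,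
      ofReal_legendrePoisson (Ioo_zero_one_subset_Ioo_neg_one_one hr)]
  have h_right : ∀ x ∈ Ioo (-1:ℝ) 1, ofReal (legendreProduct x * ballPoissonMoment x) =
      ∫⁻ r in Ioo 0 1, ofReal (r * (legendreProduct x * ballPoissonKernel r x)) := fun x hx => by
    simp only [mul_left_comm _ (legendreProduct x)]
    rw [setLIntegral_ofReal_const_mul (legendreProduct_nonneg x),
      ENNReal.ofReal_mul (legendreProduct_nonneg x), ofReal_ballPoissonMoment hx]
  rw [← setLIntegral_legendreProduct_mul_ballPoissonMoment,
    setLIntegral_congr_fun measurableSet_Ioo h_left,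
    setLIntegral_congr_fun measurableSet_Ioo h_right]
  exact setLIntegral_setLIntegral_swap (by unfold Function.uncurry; fun_prop)

lemma legendrePoisson_eq_mul_ellipticK (hr : r ∈ Ioo 0 1) :
    legendrePoisson r = 8 * √2 * π * ellipticK r := by
  obtain ⟨A, hA⟩ := exists_eqOn_legendrePoisson_const_mul_ellipticK
  have hr' := Ioo_zero_one_subset_Ioo_neg_one_one hr
  have hA0 : 0 ≤ A := by
    have h_nonneg := legendrePoisson_nonneg (Ioo_subset_Icc_self hr')
    rw [hA hr] at h_nonneg
    exact nonneg_of_mul_nonneg_left h_nonneg (ellipticK_pos hr')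
  have h_moment : ofReal A = ofReal (8 * √2 * π) := by
    calc ofReal A = ∫⁻ r in Ioo 0 1, ofReal (A * (r * ellipticK r)) := by
          rw [setLIntegral_ofReal_const_mul hA0, setLIntegral_mul_ellipticK, mul_one]
      _ = ∫⁻ r in Ioo 0 1, ofReal (r * legendrePoisson r) :=
          setLIntegral_congr_fun measurableSet_Ioo fun r hr => by
            rw [hA hr, mul_left_comm]
      _ = ofReal (8 * √2 * π) := setLIntegral_mul_legendrePoisson
  rw [hA hr, (ENNReal.ofReal_eq_ofReal_iff hA0 (by positivity)).1 h_moment]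

lemma hasDerivAt_sub_pow_three_div_legendreRadius (hx : x < 1) (σ : ℝ) :
    HasDerivAt (fun σ => 4 * (σ - σ ^ 3) / legendreRadius (σ ^ 4) x ^ 1)
      (8 * (1 - σ ^ 2) * ballPoissonKernel (σ ^ 4) x -
        4 * (1 + σ ^ 2) / legendreRadius (σ ^ 4) x) σ := by
  have h_pos := legendreRadius_arg_pos (show 0 ≤ σ ^ 4 by positivity) hx
  have h_num : HasDerivAt (fun σ : ℝ => 4 * (σ - σ ^ 3)) (4 * (1 - 3 * σ ^ 2)) σ :=
    (((hasDerivAt_id σ).fun_sub (hasDerivAt_pow 3 σ)).const_mul 4).congr_deriv (by norm_num)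
  refine (hasDerivAt_div_sqrt_pow h_num (hasDerivAt_legendreRadius_pow_four_arg σ x)
    h_pos 1).congr_deriv ?_
  rw [← legendreRadius, ballPoissonKernel]
  have h_inv : 1 / legendreRadius (σ ^ 4) x =
      (1 - 2 * σ ^ 4 * x + (σ ^ 4) ^ 2) / legendreRadius (σ ^ 4) x ^ 3 := by
    have h_ne := (legendreRadius_pos h_pos).ne'
    rw [div_eq_div_iff h_ne (pow_ne_zero 3 h_ne), ← legendreRadius_sq h_pos]
    ring
  push_cast
  linear_combination (8 - 8 * σ ^ 2) * h_inv

lemma ofReal_legendreQuarter_eq_ballPoissonKernel (hx : x < 1) : ofReal (legendreQuarter x) =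
    ∫⁻ σ in Ioo 0 1, ofReal (8 * (1 - σ ^ 2) * ballPoissonKernel (σ ^ 4) x) := by
  have h_kernel : Continuous fun σ : ℝ => 8 * (1 - σ ^ 2) * ballPoissonKernel (σ ^ 4) x :=
    Continuous.mul (by fun_prop) (Continuous.div (by fun_prop) (by fun_prop) fun σ =>
      pow_ne_zero 3 (legendreRadius_pow_four_pos hx σ).ne')
  have h_quarter : Continuous fun σ : ℝ => 4 * (1 + σ ^ 2) / legendreRadius (σ ^ 4) x :=
    Continuous.div (by fun_prop) (by fun_prop) fun σ => (legendreRadius_pow_four_pos hx σ).ne'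
  have h_int := h_kernel.intervalIntegrable (μ := volume) 0 1
  have h_int' := h_quarter.intervalIntegrable (μ := volume) 0 1
  have h_diff := intervalIntegral.integral_eq_sub_of_hasDerivAt
    (fun σ _ => hasDerivAt_sub_pow_three_div_legendreRadius hx σ) (h_int.sub h_int')
  rw [intervalIntegral.integral_sub h_int h_int'] at h_diff
  norm_num [sub_eq_zero] at h_diff
  rw [legendreQuarter, ← h_diff]
  refine ofReal_intervalIntegral_eq_setLIntegral zero_le_one h_kernel.continuousOn fun σ hσ => ?_
  have h_sq : 0 ≤ 1 - σ ^ 2 := sub_nonneg.2 (pow_le_one₀ hσ.1 hσ.2)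
  have h_pow : σ ^ 4 ≤ 1 := pow_le_one₀ hσ.1 hσ.2
  exact mul_nonneg (by positivity)
    (ballPoissonKernel_nonneg ⟨by linarith [show 0 ≤ σ ^ 4 by positivity], h_pow⟩ x)

end PoissonValue

lemma setLIntegral_legendreQuarter_sq_mul_neg_eq_ellipticKMoment :
    ∫⁻ x in Ioo (-1) 1, ofReal (legendreQuarter x ^ 2 * legendreQuarter (-x)) =
      ofReal (64 * √2 * π) * ellipticKMoment (-1) := by
  have h_left : ∀ x ∈ Ioo (-1:ℝ) 1, ofReal (legendreQuarter x ^ 2 * legendreQuarter (-x)) =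
      ∫⁻ σ in Ioo 0 1,
        ofReal (legendreProduct x * (8 * (1 - σ ^ 2) * ballPoissonKernel (σ ^ 4) x)) := by
    intro x hx
    rw [setLIntegral_ofReal_const_mul (legendreProduct_nonneg x),
      ← ofReal_legendreQuarter_eq_ballPoissonKernel hx.2,
      ← ENNReal.ofReal_mul (legendreProduct_nonneg x), legendreProduct]
    ring_nf
  have h_right : ∀ σ ∈ Ioo (0:ℝ) 1, (∫⁻ x in Ioo (-1) 1,
        ofReal (legendreProduct x * (8 * (1 - σ ^ 2) * ballPoissonKernel (σ ^ 4) x))) =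
      ofReal (64 * √2 * π) * (ofReal (1 + -1 * σ ^ 2) * ofReal (ellipticK (σ ^ 4))) := by
    intro σ hσ
    have h_sq : 0 ≤ 1 - σ ^ 2 := sub_nonneg.2 (pow_le_one₀ hσ.1.le hσ.2.le)
    have h_mem : σ ^ 4 ∈ Ioo 0 1 := (bijOn_pow_Ioo four_ne_zero).mapsTo hσ
    simp only [mul_left_comm (legendreProduct _)]
    rw [setLIntegral_ofReal_const_mul (by positivity),
      ← ofReal_legendrePoisson (Ioo_zero_one_subset_Ioo_neg_one_one h_mem),
      legendrePoisson_eq_mul_ellipticK h_mem, ← ENNReal.ofReal_mul (by positivity),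
      ← ENNReal.ofReal_mul (by linarith), ← ENNReal.ofReal_mul (by positivity)]
    ring_nf
  rw [setLIntegral_congr_fun measurableSet_Ioo h_left,
    setLIntegral_setLIntegral_swap (by unfold Function.uncurry; fun_prop),
    setLIntegral_congr_fun measurableSet_Ioo h_right,
    lintegral_const_mul' _ _ ENNReal.ofReal_ne_top, ellipticKMoment]

lemma setLIntegral_ellipticK_sq_mul_ellipticK :
    ∫⁻ t in Ioo 0 1, ofReal (4 * ((1 - t) * ellipticK (√(1 - t)) ^ 2 * ellipticK (√t) /
      (1 + t) ^ ((3:ℝ) / 2))) = ofReal ((Gamma (1 / 8) * Gamma (3 / 8)) ^ 2 / 24) := by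
  have h_pos : 0 < 16 * √2 := by positivity
  rw [← ENNReal.mul_right_inj (ENNReal.ofReal_pos.2 h_pos).ne' ENNReal.ofReal_ne_top,
    ← setLIntegral_legendreQuarter_sq_mul_neg,
    setLIntegral_legendreQuarter_sq_mul_neg_eq_ellipticKMoment, ellipticKMoment_neg_one,
    ← ENNReal.ofReal_mul (by positivity), ← ENNReal.ofReal_mul h_pos.le]
  congr 1
  field_simp
  norm_num

theorem stmt_8 :
    4 * ∫ t in (0:ℝ)..1,
        (1-t) * (ellipticK (Real.sqrt (1-t)))^2 * ellipticK (Real.sqrt t)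
          / (1+t) ^ ((3:ℝ)/2)
      = (Real.Gamma (1/8) * Real.Gamma (3/8))^2 / 24 := by
  rw [← intervalIntegral.integral_const_mul, integral_of_le zero_le_one,
    integral_Ioc_eq_integral_Ioo, integral_eq_lintegral_of_nonneg_ae,
    setLIntegral_ellipticK_sq_mul_ellipticK, ENNReal.toReal_ofReal (by positivity)]
  · refine ae_restrict_of_forall_mem measurableSet_Ioo fun t ht => ?_
    have h_sub : 0 ≤ 1 - t := sub_nonneg.2 ht.2.le
    have h_add : 0 ≤ 1 + t := by linarith [ht.1]
    have h_nonneg := ellipticK_nonneg (√t)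
    simp only [Pi.zero_apply]
    positivity
  · exact Measurable.aestronglyMeasurable (by fun_prop)
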